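/- arXiv:1906.09541 — 4 statements merged into one kernel-verified Lean document; each statement's English description precedes it below -/
import Mathlib

section
/- The equality =_RCCS is closed under parallel composition: for all RCCS processes A, B, C, D, if A =_RCCS B and C =_RCCS D then A|C =_RCCS B|D. (Equivalently, the equivalence closure of {(A|C, B|D) | A =_RCCS B and C =_RCCS D} ∪ =_RCCS is a codivergent branching bisimulation.) -/
/-!
Formalization of RCCS (Randomized CCS) following the paper
"A Uniform Framework for Probabilistic Process Models".
Channels form a type `Chan`; terms use de Bruijn indices for process variables.
-/

noncomputable section
open scoped Classical

/-- RCCS terms over a set of channels, with de Bruijn process variables.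
`sum n α T` is the nondeterministic choice `Σ_{i∈[n]} α_i.T_i` (guards are
names `Sum.inl a` or conames `Sum.inr a`); `rand n p T` is the random choice
`⊕_{i∈[n]} p_i τ.T_i`; `par` is composition, `loc a T` is localization `(a)T`,
and `fix T` is the fixpoint `μX.T`. -/
inductive Tm (Chan : Type) : Type
  | var : ℕ → Tm Chan
  | sum : (n : ℕ) → (Fin n → Chan ⊕ Chan) → (Fin n → Tm Chan) → Tm Chan
  | rand : (n : ℕ) → (Fin n → ℝ) → (Fin n → Tm Chan) → Tm Chan
  | par : Tm Chan → Tm Chan → Tm Chan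
  | loc : Chan → Tm Chan → Tm Chan
  | fix : Tm Chan → Tm Chan

variable {Chan : Type}

/-- Labels: names, conames, and `tau p` for `p ∈ (0,1]`; `tau 1` is the plain
silent action `τ`, identified with `1τ`. -/
inductive Lab (Chan : Type) : Type
  | name : Chan → Lab Chan
  | coname : Chan → Lab Chan
  | tau : ℝ → Lab Chan

/-- The label of an external prefix. -/
def guardLab : Chan ⊕ Chan → Lab Chan
  | .inl a => .name a
  | .inr a => .coname a

/-- A label is an action in `Act` if it is a name, a coname, or `τ = 1τ`. -/
def Lab.IsAct : Lab Chan → Prop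
  | .name _ => True
  | .coname _ => True
  | .tau p => p = 1

/-- Shift de Bruijn indices `≥ c` up by one. -/
def Tm.lift : ℕ → Tm Chan → Tm Chan
  | c, .var n => .var (if n < c then n else n + 1)
  | c, .sum n α T => .sum n α fun i => Tm.lift c (T i)
  | c, .rand n p T => .rand n p fun i => Tm.lift c (T i)
  | c, .par S T => .par (Tm.lift c S) (Tm.lift c T)
  | c, .loc a T => .loc a (Tm.lift c T)
  | c, .fix T => .fix (Tm.lift (c + 1) T)

/-- Capture-avoiding substitution of the term `S` for variable `c`
(other variables above `c` are shifted down). -/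
def Tm.inst : ℕ → Tm Chan → Tm Chan → Tm Chan
  | c, S, .var n => if n < c then .var n else if n = c then S else .var (n - 1)
  | c, S, .sum n α T => .sum n α fun i => Tm.inst c S (T i)
  | c, S, .rand n p T => .rand n p fun i => Tm.inst c S (T i)
  | c, S, .par S' T => .par (Tm.inst c S S') (Tm.inst c S T)
  | c, S, .loc a T => .loc a (Tm.inst c S T)
  | c, S, .fix T => .fix (Tm.inst (c + 1) (Tm.lift 0 S) T)

/-- All free variables are `< k`. -/
def Tm.ClosedAt : ℕ → Tm Chan → Prop
  | k, .var n => n < k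
  | k, .sum _ _ T => ∀ i, Tm.ClosedAt k (T i)
  | k, .rand _ _ T => ∀ i, Tm.ClosedAt k (T i)
  | k, .par S T => Tm.ClosedAt k S ∧ Tm.ClosedAt k T
  | k, .loc _ T => Tm.ClosedAt k T
  | k, .fix T => Tm.ClosedAt (k + 1) T

/-- Variable `v` is guarded: every free occurrence of `v` is under a prefix. -/
def Tm.Guarded : ℕ → Tm Chan → Prop
  | v, .var n => n ≠ v
  | _, .sum _ _ _ => True
  | _, .rand _ _ _ => True
  | v, .par S T => Tm.Guarded v S ∧ Tm.Guarded v T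
  | v, .loc _ T => Tm.Guarded v T
  | v, .fix T => Tm.Guarded (v + 1) T

/-- Well-formedness: in every random choice `⊕_{i∈I} p_i τ.T_i` we have `|I| ≥ 2`,
`p_i ∈ (0,1)` and `Σ_i p_i = 1`; in every fixpoint `μX.T` the variable `X` is
guarded in `T`. -/
def Tm.WF : Tm Chan → Prop
  | .var _ => True
  | .sum _ _ T => ∀ i, Tm.WF (T i)
  | .rand n p T => 2 ≤ n ∧ (∀ i, 0 < p i ∧ p i < 1) ∧ (∑ i, p i) = 1 ∧ ∀ i, Tm.WF (T i)
  | .par S T => Tm.WF S ∧ Tm.WF T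
  | .loc _ T => Tm.WF T
  | .fix T => Tm.Guarded 0 T ∧ Tm.WF T

/-- A term with no random choice, i.e. a CCS term. -/
def Tm.NoRand : Tm Chan → Prop
  | .var _ => True
  | .sum _ _ T => ∀ i, Tm.NoRand (T i)
  | .rand _ _ _ => False
  | .par S T => Tm.NoRand S ∧ Tm.NoRand T
  | .loc _ T => Tm.NoRand T
  | .fix T => Tm.NoRand T

/-- The transition relation of RCCS. -/
inductive Step : Tm Chan → Lab Chan → Tm Chan → Prop
  | sum {n α T} (i : Fin n) : Step (.sum n α T) (guardLab (α i)) (T i)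
  | rand {n p T} (i : Fin n) : Step (.rand n p T) (.tau (p i)) (T i)
  | comL {S S' T T' a} : Step S (.name a) S' → Step T (.coname a) T' →
      Step (.par S T) (.tau 1) (.par S' T')
  | comR {S S' T T' a} : Step S (.coname a) S' → Step T (.name a) T' →
      Step (.par S T) (.tau 1) (.par S' T')
  | parL {S S' T l} : Step S l S' → Step (.par S T) l (.par S' T)
  | parR {S T T' l} : Step T l T' → Step (.par S T) l (.par S T')
  | loc {T T' l} (a : Chan) : Step T l T' → l ≠ .name a → l ≠ .coname a →
      Step (.loc a T) l (.loc a T')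
  | fix {T T' l} : Step (Tm.inst 0 (.fix T) T) l T' → Step (.fix T) l T'

/-- Collective silent transitions `B →^{∐_{i∈[n]} p_i τ} ∐_{i∈[n]} B_i`,
arising from a single random choice and closed under composition,
localization and recursion. -/
inductive CStep : Tm Chan → (n : ℕ) → (Fin n → ℝ) → (Fin n → Tm Chan) → Prop
  | rand {n p T} : CStep (.rand n p T) n p T
  | parL {S T n p S'} : CStep S n p S' → CStep (.par S T) n p fun i => .par (S' i) T
  | parR {S T n p T'} : CStep T n p T' → CStep (.par S T) n p fun i => .par S (T' i)
  | loc {T n p T'} (a : Chan) : CStep T n p T' → CStep (.loc a T) n p fun i => .loc a (T' i)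
  | fix {T n p T'} : CStep (Tm.inst 0 (.fix T) T) n p T' → CStep (.fix T) n p T'

/-- The set `P_RCCS` of RCCS processes: closed well-formed terms. -/
def Proc (Chan : Type) : Type := {T : Tm Chan // T.ClosedAt 0 ∧ T.WF}

/-- A (potential) silent tree: nodes are addressed by reversed lists of child
indices (the root is `[]`, the `i`-th child of `σ` is `i :: σ`); each node
carries a process label and the probability labelling its incoming edge
(the root carries `1`). -/
structure PTree (Chan : Type) where
  node : List ℕ → Option (Proc Chan × ℝ)

namespace PTree

variable (t : PTree Chan)

/-- The address `σ` is a node of the tree. -/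
def hasNode (σ : List ℕ) : Prop := (t.node σ).isSome

/-- The probability labelling the incoming edge of the node at `σ`. -/
def edgeProb (σ : List ℕ) : ℝ := ((t.node σ).map Prod.snd).getD 0

/-- The probability of the path from the root to `σ`: the product of the edge
labels along it (`1` for the empty path). -/
def pathProb (t : PTree Chan) : List ℕ → ℝ
  | [] => 1
  | i :: σ => t.edgeProb (i :: σ) * pathProb t σ

/-- `σ` is a leaf. -/
def IsLeaf (σ : List ℕ) : Prop := t.hasNode σ ∧ ¬ t.hasNode (0 :: σ)

/-- `P(t↾_k)`: the sum of the probabilities of the branches of the truncation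
of `t` at depth `k` (a branch of `t↾_k` ends either at depth `k` or at a leaf
of `t` of depth `< k`). -/
def truncProb (k : ℕ) : ℝ :=
  ∑' σ : List ℕ,
    if t.hasNode σ ∧ (σ.length = k ∨ (σ.length < k ∧ ¬ t.hasNode (0 :: σ)))
    then t.pathProb σ else 0

/-- `P^k(t)`: the sum of the probabilities of the finite branches of `t` of
length at most `k`. -/
def finBranchProb (k : ℕ) : ℝ :=
  ∑' σ : List ℕ, if t.IsLeaf σ ∧ σ.length ≤ k then t.pathProb σ else 0

/-- `t` is regular: `P^f(t) = lim_k P^k(t) = 1`. -/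
def Regular : Prop := Filter.Tendsto t.finBranchProb Filter.atTop (nhds 1)

/-- `t` is divergent: `P^f(t) = lim_k P^k(t) = 0`. -/
def Divergent : Prop := Filter.Tendsto t.finBranchProb Filter.atTop (nhds 0)

end PTree

/-- `t` is a silent tree of `A`: the root is labeled `A`, the node set is
prefix-closed with children indexed by an initial segment of `ℕ`, the tree is
finitely branching, and every edge labeled `p` from `B` to `B'` satisfies
`p ∈ (0,1]` and `B →^{pτ} B'`. -/
def IsSilentTree (A : Proc Chan) (t : PTree Chan) : Prop :=
  t.node [] = some (A, 1) ∧
  (∀ i σ, t.hasNode (i :: σ) → t.hasNode σ) ∧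
  (∀ i j σ, j ≤ i → t.hasNode (i :: σ) → t.hasNode (j :: σ)) ∧
  (∀ σ, ∃ n, ∀ i, n ≤ i → ¬ t.hasNode (i :: σ)) ∧
  (∀ σ i B p B' p', t.node σ = some (B, p) → t.node (i :: σ) = some (B', p') →
    0 < p' ∧ p' ≤ 1 ∧ Step B.val (.tau p') B'.val)

/-- An ε-tree of `A` with regard to `E`: an `E`-tree of `A` (all node labels lie
in `[A]_E`) such that (1) any edge labeled `q < 1` out of a node `B` comes from a
collective random transition whose targets are exactly the children of `B`, and
(2) an edge labeled `1` out of `B` is a transition `B →^τ B'` to the unique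
child `B'` of `B`. -/
def IsETree (E : Proc Chan → Proc Chan → Prop) (A : Proc Chan) (t : PTree Chan) : Prop :=
  IsSilentTree A t ∧
  (∀ σ B p, t.node σ = some (B, p) → E A B) ∧
  (∀ σ i B p B' q, t.node σ = some (B, p) → t.node (i :: σ) = some (B', q) → q < 1 →
    ∃ n ps Ts, CStep B.val n ps Ts ∧
      (∀ j : ℕ, t.hasNode (j :: σ) ↔ j < n) ∧
      (∀ j : Fin n, ∃ C : Proc Chan, C.val = Ts j ∧ t.node ((j : ℕ) :: σ) = some (C, ps j))) ∧
  (∀ σ i B p B', t.node σ = some (B, p) → t.node (i :: σ) = some (B', 1) →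
    Step B.val (.tau 1) B'.val ∧ i = 0 ∧ ¬ t.hasNode (1 :: σ))

/-- The `E`-class of `A`. -/
def classOf (E : Proc Chan → Proc Chan → Prop) (A : Proc Chan) : Set (Proc Chan) := {B | E A B}

/-- `C` is an equivalence class of `E`. -/
def IsClass (E : Proc Chan → Proc Chan → Prop) (C : Set (Proc Chan)) : Prop :=
  ∃ A, C = classOf E A

/-- An equivalence `E` on `P_RCCS` is codivergent if for every `E`-class either
all members have a divergent ε-tree with regard to `E` or none does. -/
def Codivergent (E : Proc Chan → Proc Chan → Prop) : Prop :=
  ∀ A B, E A B →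
    ((∃ t, IsETree E A t ∧ t.Divergent) ↔ (∃ t, IsETree E B t ∧ t.Divergent))

/-- An ℓ-transition `A ⇝_E →^ℓ C`: a regular ε-tree of `A` with regard to `E`
such that every leaf `L` has a transition `L →^ℓ L'` with `L' ∈ C`. -/
def LTrans (E : Proc Chan → Proc Chan → Prop) (A : Proc Chan) (l : Lab Chan)
    (C : Set (Proc Chan)) : Prop :=
  ∃ t, IsETree E A t ∧ t.Regular ∧
    ∀ σ L p, t.node σ = some (L, p) → ¬ t.hasNode (0 :: σ) →
      ∃ L' ∈ C, Step L.val l L'.val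

/-- The raw term `T` belongs to the set `C` of processes. -/
def inC (C : Set (Proc Chan)) (T : Tm Chan) : Prop := ∃ P ∈ C, P.val = T

/-- `P(L → C)` of a collective silent transition: the sum of the `p_i` whose
target lies in `C`. -/
def collProb (C : Set (Proc Chan)) {n : ℕ} (ps : Fin n → ℝ) (Ts : Fin n → Tm Chan) : ℝ :=
  ∑ i, if inC C (Ts i) then ps i else 0

/-- A `q`-transition `A ⇝_E →^q C`: a regular ε-tree of `A` with regard to `E`
such that every leaf has a collective silent transition whose weighted
probability `P_E(L → C) = P(L → C)/(1 − P(L → [A]_E))` of reaching `C` is `q`. -/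
def QTrans (E : Proc Chan → Proc Chan → Prop) (A : Proc Chan) (q : ℝ)
    (C : Set (Proc Chan)) : Prop :=
  ∃ t, IsETree E A t ∧ t.Regular ∧
    ∀ σ L p, t.node σ = some (L, p) → ¬ t.hasNode (0 :: σ) →
      ∃ (n : ℕ) (ps : Fin n → ℝ) (Ts : Fin n → Tm Chan), CStep L.val n ps Ts ∧
        collProb C ps Ts / (1 - collProb (classOf E A) ps Ts) = q

/-- `E` is a branching bisimulation on `P_RCCS`: an equivalence such that
(1) ℓ-transitions with `ℓ ≠ τ ∨ C ≠ [A]_E` are bisimulated by all members of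
`[A]_E`, and (2) likewise for `q`-transitions with `q ∈ (0,1]` and `C ≠ [A]_E`. -/
def IsBB (E : Proc Chan → Proc Chan → Prop) : Prop :=
  Equivalence E ∧
  (∀ A B l C, l.IsAct → IsClass E C → E A B → (l ≠ Lab.tau 1 ∨ C ≠ classOf E A) →
    LTrans E A l C → LTrans E B l C) ∧
  (∀ A B q C, 0 < q → q ≤ 1 → IsClass E C → E A B → C ≠ classOf E A →
    QTrans E A q C → QTrans E B q C)

/-- `E` is a codivergent branching bisimulation on `P_RCCS`. -/
def IsCBB (E : Proc Chan → Proc Chan → Prop) : Prop := IsBB E ∧ Codivergent E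

/-- `=_RCCS`, the largest codivergent branching bisimulation: the union of all
codivergent branching bisimulations. -/
def RccsEq (A B : Proc Chan) : Prop := ∃ E, IsCBB E ∧ E A B

/-- The composition of two processes. -/
def Proc.par (A B : Proc Chan) : Proc Chan :=
  ⟨.par A.val B.val, ⟨A.prop.1, B.prop.1⟩, A.prop.2, B.prop.2⟩

namespace Aux

open PTree Filter

theorem proc_ext {P Q : Proc Chan} (h : P.val = Q.val) : P = Q := Subtype.ext h

theorem par_inj {A B C D : Proc Chan} (h : A.par C = B.par D) : A = B ∧ C = D := by
  have := congrArg Subtype.val h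
  simp only [Proc.par, Tm.par.injEq] at this
  exact ⟨proc_ext this.1, proc_ext this.2⟩

/-- A process whose term is a composition is a composition of processes. -/
theorem par_split {P : Proc Chan} {S T : Tm Chan} (h : P.val = .par S T) :
    ∃ A C : Proc Chan, A.val = S ∧ C.val = T ∧ P = A.par C := by
  obtain ⟨v, h1, h2⟩ := P
  simp only at h
  subst h
  exact ⟨⟨S, h1.1, h2.1⟩, ⟨T, h1.2, h2.2⟩, rfl, rfl, rfl⟩

theorem cstep_step {B : Tm Chan} {n ps Ts} (h : CStep B n ps Ts) (i : Fin n) :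
    Step B (.tau (ps i)) (Ts i) := by
  induction h with
  | rand => exact Step.rand i
  | parL _ ih => exact Step.parL (ih i)
  | parR _ ih => exact Step.parR (ih i)
  | loc a _ ih => exact Step.loc a (ih i) (by simp) (by simp)
  | fix _ ih => exact Step.fix (ih i)

/-- The product relation. -/
def PE (E₁ E₂ : Proc Chan → Proc Chan → Prop) (P Q : Proc Chan) : Prop :=
  P = Q ∨ ∃ A B C D, P = A.par C ∧ Q = B.par D ∧ E₁ A B ∧ E₂ C D

section tree
variable {E E₁ E₂ : Proc Chan → Proc Chan → Prop} {t t₁ t₂ : PTree Chan} {A B D : Proc Chan}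

theorem hasNode_iff {σ} : t.hasNode σ ↔ ∃ L p, t.node σ = some (L, p) := by
  simp [hasNode, Option.isSome_iff_exists]

theorem fin_nodes (h : IsSilentTree A t) (k : ℕ) :
    {σ | t.hasNode σ ∧ σ.length ≤ k}.Finite := by
  induction k with
  | zero =>
    refine (Set.finite_singleton []).subset ?_
    rintro σ ⟨_, h2⟩
    simpa using h2
  | succ k ih =>
    choose n hn using h.2.2.2.1
    refine ((Set.finite_singleton []).union
      (ih.biUnion fun σ _ => ((Set.finite_lt_nat (n σ)).image (fun i => i :: σ)))).subset ?_
    rintro σ ⟨h1, h2⟩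
    cases σ with
    | nil => simp
    | cons i σ =>
      right
      simp only [Set.mem_iUnion]
      refine ⟨σ, ⟨h.2.1 _ _ h1, by simpa using h2⟩, i, ?_, rfl⟩
      by_contra hc
      exact hn σ i (by simpa using hc) h1

theorem fbp_eq (h : IsSilentTree A t) (k : ℕ) :
    ∃ s : Finset (List ℕ), (∀ σ, σ ∈ s ↔ t.IsLeaf σ ∧ σ.length ≤ k) ∧
      t.finBranchProb k = ∑ σ ∈ s, t.pathProb σ := by
  have hf : {σ | t.IsLeaf σ ∧ σ.length ≤ k}.Finite :=
    (fin_nodes h k).subset fun σ hσ => ⟨hσ.1.1, hσ.2⟩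
  refine ⟨hf.toFinset, by simp, ?_⟩
  unfold finBranchProb
  rw [tsum_eq_sum (s := hf.toFinset)]
  · refine Finset.sum_congr rfl fun σ hσ => ?_
    rw [if_pos (by simpa using hσ)]
  · intro σ hσ
    rw [if_neg (by simpa using hσ)]

theorem pathProb_pos (h : IsSilentTree A t) {σ} (hs : t.hasNode σ) : 0 < t.pathProb σ := by
  induction σ with
  | nil => simp [pathProb]
  | cons i σ ih =>
    have h' := h.2.1 _ _ hs
    obtain ⟨L, p, hL⟩ := hasNode_iff.1 hs
    obtain ⟨L0, p0, hL0⟩ := hasNode_iff.1 h'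
    have := h.2.2.2.2 _ _ _ _ _ _ hL0 hL
    simp only [pathProb, edgeProb, hL, Option.map_some, Option.getD_some]
    exact mul_pos this.1 (ih h')

theorem exists_leaf (hr : t.Regular) : ∃ σ, t.IsLeaf σ := by
  by_contra hc
  push Not at hc
  have : t.finBranchProb = fun _ => 0 := by
    funext k
    simp [finBranchProb, hc]
  unfold Regular at hr
  rw [this] at hr
  exact zero_ne_one (tendsto_nhds_unique tendsto_const_nhds hr)

theorem divergent_of_leafless (h : ∀ σ, ¬ t.IsLeaf σ) : t.Divergent := by
  have : t.finBranchProb = fun _ => 0 := by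
    funext k
    simp [finBranchProb, h]
  unfold Divergent
  rw [this]
  exact tendsto_const_nhds

theorem leafless_of_divergent (h : IsSilentTree A t) (hd : t.Divergent) (σ) : ¬ t.IsLeaf σ := by
  intro hl
  have hp := pathProb_pos h hl.1
  have : t.pathProb σ ≤ 0 := by
    refine ge_of_tendsto hd ?_
    filter_upwards [eventually_ge_atTop σ.length] with k hk
    obtain ⟨s, hs, he⟩ := fbp_eq h k
    rw [he]
    exact Finset.single_le_sum (f := t.pathProb)
      (fun τ hτ => (pathProb_pos h ((hs τ).1 hτ).1.1).le) ((hs σ).2 ⟨hl, hk⟩)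
  linarith

/-- One move from `P` into the set `X`. -/
def OneMove (X : Set (Proc Chan)) (P : Proc Chan) : Prop :=
  (∃ P' ∈ X, Step P.val (.tau 1) P'.val) ∨
  (∃ (n : ℕ) (ps : Fin n → ℝ) (Ts : Fin n → Proc Chan),
    CStep P.val n ps (fun i => (Ts i).val) ∧ 0 < n ∧ (∀ i, 0 < ps i ∧ ps i < 1) ∧ ∀ i, Ts i ∈ X)

theorem OneMove.mono {X Y : Set (Proc Chan)} (h : X ⊆ Y) {P} (hm : OneMove X P) : OneMove Y P := by
  rcases hm with ⟨P', h1, h2⟩ | ⟨n, ps, Ts, h1, h2, h3, h4⟩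
  · exact .inl ⟨P', h h1, h2⟩
  · exact .inr ⟨n, ps, Ts, h1, h2, h3, fun i => h (h4 i)⟩

theorem OneMove.parL {X : Set (Proc Chan)} {P} (Q : Proc Chan) (hm : OneMove X P) :
    OneMove {R | ∃ P' ∈ X, R = P'.par Q} (P.par Q) := by
  rcases hm with ⟨P', h1, h2⟩ | ⟨n, ps, Ts, h1, h2, h3, h4⟩
  · exact .inl ⟨P'.par Q, ⟨P', h1, rfl⟩, Step.parL h2⟩
  · exact .inr ⟨n, ps, fun i => (Ts i).par Q, CStep.parL h1, h2, h3, fun i => ⟨_, h4 i, rfl⟩⟩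

theorem OneMove.parR {X : Set (Proc Chan)} {P} (Q : Proc Chan) (hm : OneMove X P) :
    OneMove {R | ∃ P' ∈ X, R = Q.par P'} (Q.par P) := by
  rcases hm with ⟨P', h1, h2⟩ | ⟨n, ps, Ts, h1, h2, h3, h4⟩
  · exact .inl ⟨Q.par P', ⟨P', h1, rfl⟩, Step.parR h2⟩
  · exact .inr ⟨n, ps, fun i => Q.par (Ts i), CStep.parR h1, h2, h3, fun i => ⟨_, h4 i, rfl⟩⟩

/-- Complementary labels. -/
def Co (l l' : Lab Chan) : Prop :=
  ∃ a, (l = .name a ∧ l' = .coname a) ∨ (l = .coname a ∧ l' = .name a)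

theorem Co.step {l l' : Lab Chan} (h : Co l l') {S S' T T'} (h1 : Step S l S') (h2 : Step T l' T') :
    Step (.par S T) (.tau 1) (.par S' T') := by
  obtain ⟨a, ⟨rfl, rfl⟩ | ⟨rfl, rfl⟩⟩ := h
  · exact Step.comL h1 h2
  · exact Step.comR h1 h2

theorem step_par_inv {P Q R : Proc Chan} {l : Lab Chan} (h : Step (P.par Q).val l R.val) :
    (∃ P' : Proc Chan, R = P'.par Q ∧ Step P.val l P'.val) ∨
    (∃ Q' : Proc Chan, R = P.par Q' ∧ Step Q.val l Q'.val) ∨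
    (l = .tau 1 ∧ ∃ (P' Q' : Proc Chan) (k k' : Lab Chan), R = P'.par Q' ∧ Co k k' ∧
      Step P.val k P'.val ∧ Step Q.val k' Q'.val) := by
  obtain ⟨R, hR⟩ := R
  simp only [Proc.par] at h
  cases h with
  | comL h1 h2 =>
    exact .inr (.inr ⟨rfl, ⟨_, hR.1.1, hR.2.1⟩, ⟨_, hR.1.2, hR.2.2⟩, _, _, rfl,
      ⟨_, .inl ⟨rfl, rfl⟩⟩, h1, h2⟩)
  | comR h1 h2 =>
    exact .inr (.inr ⟨rfl, ⟨_, hR.1.1, hR.2.1⟩, ⟨_, hR.1.2, hR.2.2⟩, _, _, rfl,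
      ⟨_, .inr ⟨rfl, rfl⟩⟩, h1, h2⟩)
  | parL h1 =>
    exact .inl ⟨⟨_, hR.1.1, hR.2.1⟩, rfl, h1⟩
  | parR h1 =>
    exact .inr (.inl ⟨⟨_, hR.1.2, hR.2.2⟩, rfl, h1⟩)

theorem cstep_par_inv {S T : Tm Chan} {n : ℕ} {ps : Fin n → ℝ} {Ts : Fin n → Tm Chan}
    (h : CStep (.par S T) n ps Ts) :
    (∃ S', Ts = (fun i => .par (S' i) T) ∧ CStep S n ps S') ∨
    (∃ T', Ts = (fun i => .par S (T' i)) ∧ CStep T n ps T') := by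
  cases h with
  | parL h => exact .inl ⟨_, rfl, h⟩
  | parR h => exact .inr ⟨_, rfl, h⟩

theorem OneMove.inv {X : Set (Proc Chan)} {P Q : Proc Chan} (h : OneMove X (P.par Q)) :
    (∃ (P' Q' : Proc Chan) (k k' : Lab Chan), P'.par Q' ∈ X ∧ Co k k' ∧ Step P.val k P'.val ∧ Step Q.val k' Q'.val) ∨
    OneMove {P' | P'.par Q ∈ X} P ∨ OneMove {Q' | P.par Q' ∈ X} Q := by
  rcases h with ⟨R, hR, hs⟩ | ⟨n, ps, Ts, h1, h2, h3, h4⟩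
  · rcases step_par_inv hs with ⟨P', rfl, h⟩ | ⟨Q', rfl, h⟩ | ⟨-, P', Q', k, k', rfl, h⟩
    · exact .inr (.inl (.inl ⟨P', hR, h⟩))
    · exact .inr (.inr (.inl ⟨Q', hR, h⟩))
    · exact .inl ⟨P', Q', k, k', hR, h⟩
  · rcases cstep_par_inv h1 with ⟨S', he, hc⟩ | ⟨S', he, hc⟩
    · have : ∀ i, ∃ A : Proc Chan, A.val = S' i ∧ Ts i = A.par Q := fun i => by
        obtain ⟨A, C, hA, hC, hT⟩ := par_split (congrFun he i)
        rw [proc_ext hC] at hT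
        exact ⟨A, hA, hT⟩
      choose A hA hT using this
      obtain rfl : S' = fun i => (A i).val := funext fun i => (hA i).symm
      exact .inr (.inl (.inr ⟨n, ps, A, hc, h2, h3, fun i => by
        show (A i).par Q ∈ X
        rw [← hT]; exact h4 i⟩))
    · have : ∀ i, ∃ A : Proc Chan, A.val = S' i ∧ Ts i = P.par A := fun i => by
        obtain ⟨A, C, hA, hC, hT⟩ := par_split (congrFun he i)
        rw [proc_ext hA] at hT
        exact ⟨C, hC, hT⟩
      choose A hA hT using this
      obtain rfl : S' = fun i => (A i).val := funext fun i => (hA i).symm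
      exact .inr (.inr (.inr ⟨n, ps, A, hc, h2, h3, fun i => by
        show P.par (A i) ∈ X
        rw [← hT]; exact h4 i⟩))

/-- Coinductive divergence inside a set of processes. -/
def Div (K : Set (Proc Chan)) (P : Proc Chan) : Prop :=
  ∃ X ⊆ K, P ∈ X ∧ ∀ R ∈ X, OneMove X R

theorem oneMove_of_tree (h : IsETree E A t) {σ P p} (hP : t.node σ = some (P, p))
    (h0 : t.hasNode (0 :: σ)) : OneMove {Q | ∃ τ q, t.node τ = some (Q, q)} P := by
  obtain ⟨L, q, hL⟩ := hasNode_iff.1 h0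
  have hs := h.1.2.2.2.2 _ _ _ _ _ _ hP hL
  rcases hs.2.1.lt_or_eq with hq | rfl
  · obtain ⟨n, ps, Ts, hc, hn, hT⟩ := h.2.2.1 _ _ _ _ _ _ hP hL hq
    choose C hC hN using hT
    obtain rfl : Ts = fun i => (C i).val := funext fun i => (hC i).symm
    refine .inr ⟨n, ps, C, hc, (hn 0).1 h0, fun i => ?_, fun i => ⟨_, _, hN i⟩⟩
    have hi := h.1.2.2.2.2 _ _ _ _ _ _ hP (hN i)
    refine ⟨hi.1, lt_of_le_of_ne hi.2.1 fun h1 => ?_⟩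
    have hN' := hN i
    rw [h1] at hN'
    have := (h.2.2.2 _ _ _ _ _ hP hN').2.1
    rw [this, hL] at hN'
    simp only [Option.some.injEq, Prod.mk.injEq] at hN'
    linarith [hN'.2]
  · exact .inl ⟨L, ⟨_, _, hL⟩, hs.2.2⟩

theorem div_of_tree (h : IsETree E A t) (hd : t.Divergent) : Div (classOf E A) A := by
  refine ⟨{Q | ∃ τ q, t.node τ = some (Q, q)}, ?_, ⟨[], 1, h.1.1⟩, ?_⟩
  · rintro Q ⟨τ, q, hQ⟩
    exact h.2.1 _ _ _ hQ
  · rintro Q ⟨τ, q, hQ⟩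
    refine oneMove_of_tree h hQ ?_
    by_contra hc
    exact leafless_of_divergent h.1 hd τ ⟨hasNode_iff.2 ⟨_, _, hQ⟩, hc⟩

/-- The tree unfolding a choice of moves. -/
def unfold (A : Proc Chan) (n : Proc Chan → ℕ) (ps : Proc Chan → ℕ → ℝ)
    (Ts : Proc Chan → ℕ → Proc Chan) : List ℕ → Option (Proc Chan × ℝ)
  | [] => some (A, 1)
  | i :: σ => (unfold A n ps Ts σ).bind fun x =>
      if i < n x.1 then some (Ts x.1 i, ps x.1 i) else none

theorem tree_of_div (h : Div (classOf E A) A) : ∃ t, IsETree E A t ∧ t.Divergent := by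
  obtain ⟨X, hX, hA, hm⟩ := h
  have key : ∀ P : Proc Chan, ∃ (n : ℕ) (ps : ℕ → ℝ) (Ts : ℕ → Proc Chan), P ∈ X →
      0 < n ∧ (∀ i < n, Ts i ∈ X) ∧
      ((n = 1 ∧ ps 0 = 1 ∧ Step P.val (.tau 1) (Ts 0).val) ∨
        ((∀ i < n, 0 < ps i ∧ ps i < 1) ∧
          CStep P.val n (fun i => ps i) (fun i => (Ts i).val))) := by
    intro P
    by_cases hP : P ∈ X
    · rcases hm P hP with ⟨P', h1, h2⟩ | ⟨n, ps, Ts, h1, h2, h3, h4⟩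
      · exact ⟨1, fun _ => 1, fun _ => P', fun _ => ⟨one_pos, fun _ _ => h1, .inl ⟨rfl, rfl, h2⟩⟩⟩
      · refine ⟨n, fun i => if h : i < n then ps ⟨i, h⟩ else 0,
          fun i => if h : i < n then Ts ⟨i, h⟩ else P, fun _ => ⟨h2, ?_, .inr ⟨?_, ?_⟩⟩⟩
        · intro i hi; simp [hi, h4]
        · intro i hi; simpa [hi] using h3 ⟨i, hi⟩
        · simpa using h1
    · exact ⟨0, fun _ => 0, fun _ => P, fun h => absurd h hP⟩
  choose n ps Ts hk using key
  let t : PTree Chan := ⟨unfold A n ps Ts⟩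
  have hroot : t.node [] = some (A, 1) := rfl
  have hmem : ∀ σ P p, t.node σ = some (P, p) → P ∈ X := by
    intro σ
    induction σ with
    | nil =>
      intro P p h
      simp only [hroot, Option.some.injEq, Prod.mk.injEq] at h
      exact h.1 ▸ hA
    | cons i σ ih =>
      intro P p h
      simp only [t, unfold, Option.bind_eq_some_iff] at h
      obtain ⟨⟨Q, q⟩, h1, h2⟩ := h
      have hQ := ih Q q h1
      by_cases hi : i < n Q
      · simp only [hi, if_true, Option.some.injEq, Prod.mk.injEq] at h2
        exact h2.1 ▸ (hk Q hQ).2.1 i hi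
      · simp [hi] at h2
  have hch : ∀ σ P p i, t.node σ = some (P, p) →
      t.node (i :: σ) = if i < n P then some (Ts P i, ps P i) else none := by
    intro σ P p i h
    show (unfold A n ps Ts σ).bind _ = _
    have h' : unfold A n ps Ts σ = some (P, p) := h
    rw [h']; rfl
  have hch' : ∀ σ P p i, t.node σ = some (P, p) → (t.hasNode (i :: σ) ↔ i < n P) := by
    intro σ P p i h
    unfold hasNode
    rw [hch σ P p i h]
    by_cases hi : i < n P <;> simp [hi]
  have hpre : ∀ i σ, t.hasNode (i :: σ) → t.hasNode σ := by
    intro i σ h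
    obtain ⟨L, p, h⟩ := hasNode_iff.1 h
    simp only [t, unfold, Option.bind_eq_some_iff] at h
    obtain ⟨⟨Q, q⟩, h1, h2⟩ := h
    exact hasNode_iff.2 ⟨Q, q, h1⟩
  have hedge : ∀ σ i P p P' p', t.node σ = some (P, p) → t.node (i :: σ) = some (P', p') →
      i < n P ∧ P' = Ts P i ∧ p' = ps P i := by
    intro σ i P p P' p' h1 h2
    rw [hch _ _ _ _ h1] at h2
    by_cases hi : i < n P
    · simp only [hi, if_true, Option.some.injEq, Prod.mk.injEq] at h2
      exact ⟨hi, h2.1.symm, h2.2.symm⟩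
    · simp [hi] at h2
  refine ⟨t, ⟨⟨hroot, hpre, ?_, ?_, ?_⟩, ?_, ?_, ?_⟩, divergent_of_leafless ?_⟩
  · intro i j σ hji h
    obtain ⟨Q, q, h1⟩ := hasNode_iff.1 (hpre _ _ h)
    rw [hch' _ _ _ _ h1] at h ⊢
    omega
  · intro σ
    by_cases hs : t.hasNode σ
    · obtain ⟨Q, q, h1⟩ := hasNode_iff.1 hs
      refine ⟨n Q, fun i hi => ?_⟩
      rw [hch' _ _ _ _ h1]
      omega
    · exact ⟨0, fun i _ h => hs (hpre _ _ h)⟩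
  · intro σ i P p P' p' h1 h2
    obtain ⟨hi, rfl, rfl⟩ := hedge _ _ _ _ _ _ h1 h2
    rcases (hk P (hmem _ _ _ h1)).2.2 with ⟨h3, h4, h5⟩ | ⟨h3, h4⟩
    · obtain rfl : i = 0 := by omega
      rw [h4]
      exact ⟨one_pos, le_rfl, h5⟩
    · exact ⟨(h3 i hi).1, (h3 i hi).2.le, cstep_step h4 ⟨i, hi⟩⟩
  · intro σ P p h
    exact hX (hmem _ _ _ h)
  · intro σ i P p P' q h1 h2 hq
    obtain ⟨hi, rfl, rfl⟩ := hedge _ _ _ _ _ _ h1 h2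
    rcases (hk P (hmem _ _ _ h1)).2.2 with ⟨h3, h4, h5⟩ | ⟨h3, h4⟩
    · obtain rfl : i = 0 := by omega
      rw [h4] at hq
      exact absurd hq (lt_irrefl _)
    · refine ⟨_, _, _, h4, fun j => hch' _ _ _ _ h1, fun j => ⟨_, rfl, ?_⟩⟩
      rw [hch _ _ _ _ h1, if_pos j.2]
  · intro σ i P p P' h1 h2
    obtain ⟨hi, rfl, h6⟩ := hedge _ _ _ _ _ _ h1 h2
    rcases (hk P (hmem _ _ _ h1)).2.2 with ⟨h3, h4, h5⟩ | ⟨h3, h4⟩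
    · obtain rfl : i = 0 := by omega
      refine ⟨h5, rfl, ?_⟩
      rw [hch' _ _ _ _ h1]
      omega
    · have := (h3 i hi).2
      linarith
  · rintro σ ⟨h1, h2⟩
    obtain ⟨Q, q, h1⟩ := hasNode_iff.1 h1
    rw [hch' _ _ _ _ h1] at h2
    exact h2 (hk Q (hmem _ _ _ h1)).1

/-- The one-node tree. -/
def triv (A : Proc Chan) : PTree Chan := ⟨fun σ => if σ = [] then some (A, 1) else none⟩

theorem triv_hasNode {σ} : (triv A).hasNode σ ↔ σ = [] := by
  unfold hasNode triv
  by_cases h : σ = [] <;> simp [h]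

theorem triv_node {σ P p} : (triv A).node σ = some (P, p) ↔ σ = [] ∧ P = A ∧ p = 1 := by
  unfold triv
  by_cases h : σ = [] <;> simp [h, eq_comm]

theorem triv_etree (hE : Equivalence E) : IsETree E A (triv A) := by
  refine ⟨⟨rfl, ?_, ?_, ?_, ?_⟩, ?_, ?_, ?_⟩ <;> simp [triv_hasNode, triv_node]
  rintro _ _ _ - rfl -
  exact hE.refl _

theorem triv_regular (A : Proc Chan) : (triv A).Regular := by
  have : (triv A).finBranchProb = fun _ => 1 := by
    funext k
    unfold finBranchProb
    rw [tsum_eq_single []]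
    · simp [IsLeaf, triv_hasNode, pathProb]
    · intro σ hσ
      simp [IsLeaf, triv_hasNode, hσ]
  unfold Regular
  rw [this]
  exact tendsto_const_nhds

/-! ### Grafting -/

/-- Split an address into an address of `t` and the rest. -/
def dec (t : PTree Chan) : List ℕ → List ℕ × List ℕ
  | [] => ([], [])
  | i :: σ => if (dec t σ).2 = [] ∧ t.hasNode (0 :: (dec t σ).1) then (i :: (dec t σ).1, [])
      else ((dec t σ).1, i :: (dec t σ).2)

theorem dec_append (t : PTree Chan) (σ) : (dec t σ).2 ++ (dec t σ).1 = σ := by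
  induction σ with
  | nil => rfl
  | cons i σ ih =>
    simp only [dec]
    split_ifs with h
    · simp only [List.nil_append, List.cons.injEq, true_and]
      simpa [h.1] using ih
    · simpa using ih

theorem dec_inv (t : PTree Chan) (σ) : (dec t σ).2 ≠ [] → ¬ t.hasNode (0 :: (dec t σ).1) := by
  induction σ with
  | nil => simp [dec]
  | cons i σ ih =>
    simp only [dec]
    split_ifs with h
    · simp
    · intro _ h0
      by_cases hb : (dec t σ).2 = []
      · exact h ⟨hb, h0⟩
      · exact ih hb h0

theorem dec_node (h : IsSilentTree A t) {a} (ha : t.hasNode a) : dec t a = (a, []) := by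
  induction a with
  | nil => rfl
  | cons i a ih =>
    have := ih (h.2.1 _ _ ha)
    simp [dec, this, h.2.2.1 i 0 a (Nat.zero_le _) ha]

theorem dec_leaf (h : IsSilentTree A t) {a} (ha : t.IsLeaf a) (b) : dec t (b ++ a) = (a, b) := by
  induction b with
  | nil => exact dec_node h ha.1
  | cons i b ih =>
    simp [dec, ih, ha.2]

/-- Graft `t₂` at the leaves of `t₁`, in parallel. -/
def graft (t₁ t₂ : PTree Chan) : PTree Chan :=
  ⟨fun σ => (t₁.node (dec t₁ σ).1).bind fun x => (t₂.node (dec t₁ σ).2).map fun y =>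
    (x.1.par y.1, if (dec t₁ σ).2 = [] then x.2 else y.2)⟩

theorem graft_hasNode {σ} : (graft t₁ t₂).hasNode σ ↔
    t₁.hasNode (dec t₁ σ).1 ∧ t₂.hasNode (dec t₁ σ).2 := by
  simp only [graft, hasNode]
  cases t₁.node (dec t₁ σ).1 <;> cases t₂.node (dec t₁ σ).2 <;> simp

theorem graft_local (h₂ : IsSilentTree D t₂) {σ L p}
    (h : (graft t₁ t₂).node σ = some (L, p)) :
    ∃ L₁ p₁ L₂ p₂, t₁.node (dec t₁ σ).1 = some (L₁, p₁) ∧ t₂.node (dec t₁ σ).2 = some (L₂, p₂) ∧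
      L = L₁.par L₂ ∧
      ((t₁.hasNode (0 :: (dec t₁ σ).1) ∧ (dec t₁ σ).2 = [] ∧
        (∀ i, dec t₁ (i :: σ) = (i :: (dec t₁ σ).1, [])) ∧
        ∀ i, (graft t₁ t₂).node (i :: σ) =
          (t₁.node (i :: (dec t₁ σ).1)).map fun x => (x.1.par L₂, x.2)) ∨
      (¬ t₁.hasNode (0 :: (dec t₁ σ).1) ∧
        (∀ i, dec t₁ (i :: σ) = ((dec t₁ σ).1, i :: (dec t₁ σ).2)) ∧
        ∀ i, (graft t₁ t₂).node (i :: σ) =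
          (t₂.node (i :: (dec t₁ σ).2)).map fun x => (L₁.par x.1, x.2))) := by
  have hn := graft_hasNode.1 (hasNode_iff.2 ⟨_, _, h⟩)
  obtain ⟨L₁, p₁, h1⟩ := hasNode_iff.1 hn.1
  obtain ⟨L₂, p₂, h2⟩ := hasNode_iff.1 hn.2
  refine ⟨L₁, p₁, L₂, p₂, h1, h2, ?_, ?_⟩
  · simp only [graft, h1, h2, Option.bind_some, Option.map_some, Option.some.injEq,
      Prod.mk.injEq] at h
    exact h.1.symm
  · by_cases hc : t₁.hasNode (0 :: (dec t₁ σ).1)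
    · have hb : (dec t₁ σ).2 = [] := by
        by_contra hb
        exact dec_inv t₁ σ hb hc
      have hd : ∀ i, dec t₁ (i :: σ) = (i :: (dec t₁ σ).1, []) := fun i => by
        simp [dec, hb, hc]
      refine .inl ⟨hc, hb, hd, fun i => ?_⟩
      rw [hb] at h2
      simp only [graft, hd, h2]
      cases t₁.node (i :: (dec t₁ σ).1) <;> simp
    · have hd : ∀ i, dec t₁ (i :: σ) = ((dec t₁ σ).1, i :: (dec t₁ σ).2) := fun i => by
        simp [dec, hc]
      refine .inr ⟨hc, hd, fun i => ?_⟩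
      simp only [graft, hd, h1]
      cases t₂.node (i :: (dec t₁ σ).2) <;> simp

theorem graft_silent (h₁ : IsSilentTree B t₁) (h₂ : IsSilentTree D t₂) :
    IsSilentTree (B.par D) (graft t₁ t₂) := by
  have hpre : ∀ i σ, (graft t₁ t₂).hasNode (i :: σ) → (graft t₁ t₂).hasNode σ := by
    intro i σ h
    rw [graft_hasNode] at h ⊢
    simp only [dec] at h
    split_ifs at h with hc
    · rw [hc.1]
      exact ⟨h₁.2.1 _ _ h.1, h.2⟩
    · exact ⟨h.1, h₂.2.1 _ _ h.2⟩
  have hmap : ∀ {t : PTree Chan} {g : Proc Chan × ℝ → Proc Chan × ℝ} {i σ τ},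
      (graft t₁ t₂).node (i :: σ) = (t.node (i :: τ)).map g →
      ((graft t₁ t₂).hasNode (i :: σ) ↔ t.hasNode (i :: τ)) := by
    intro t g i σ τ h
    unfold hasNode
    rw [h, Option.isSome_map]
  refine ⟨?_, hpre, ?_, ?_, ?_⟩
  · simp [graft, dec, h₁.1, h₂.1]
  · intro i j σ hji h
    obtain ⟨L, p, hL⟩ := hasNode_iff.1 (hpre _ _ h)
    obtain ⟨L₁, p₁, L₂, p₂, h1, h2, rfl, ⟨-, -, -, hc⟩ | ⟨-, -, hc⟩⟩ := graft_local h₂ hL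
    · rw [hmap (hc _)] at h ⊢
      exact h₁.2.2.1 _ _ _ hji h
    · rw [hmap (hc _)] at h ⊢
      exact h₂.2.2.1 _ _ _ hji h
  · intro σ
    by_cases hs : (graft t₁ t₂).hasNode σ
    · obtain ⟨L, p, hL⟩ := hasNode_iff.1 hs
      obtain ⟨L₁, p₁, L₂, p₂, h1, h2, rfl, ⟨-, -, -, hc⟩ | ⟨-, -, hc⟩⟩ := graft_local h₂ hL
      · obtain ⟨n, hn⟩ := h₁.2.2.2.1 (dec t₁ σ).1
        exact ⟨n, fun i hi => by rw [hmap (hc _)]; exact hn i hi⟩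
      · obtain ⟨n, hn⟩ := h₂.2.2.2.1 (dec t₁ σ).2
        exact ⟨n, fun i hi => by rw [hmap (hc _)]; exact hn i hi⟩
    · exact ⟨0, fun i _ h => hs (hpre _ _ h)⟩
  · intro σ i P p P' p' hL hL'
    obtain ⟨L₁, p₁, L₂, p₂, h1, h2, rfl, ⟨-, -, -, hc⟩ | ⟨-, -, hc⟩⟩ := graft_local h₂ hL
    · rw [hc, Option.map_eq_some_iff] at hL'
      obtain ⟨⟨Q, q⟩, hq, he⟩ := hL'
      simp only [Prod.mk.injEq] at he
      obtain ⟨rfl, rfl⟩ := he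
      have := h₁.2.2.2.2 _ _ _ _ _ _ h1 hq
      exact ⟨this.1, this.2.1, Step.parL this.2.2⟩
    · rw [hc, Option.map_eq_some_iff] at hL'
      obtain ⟨⟨Q, q⟩, hq, he⟩ := hL'
      simp only [Prod.mk.injEq] at he
      obtain ⟨rfl, rfl⟩ := he
      have := h₂.2.2.2.2 _ _ _ _ _ _ h2 hq
      exact ⟨this.1, this.2.1, Step.parR this.2.2⟩

theorem graft_etree (h₁ : IsETree E₁ B t₁) (h₂ : IsETree E₂ D t₂) :
    IsETree (PE E₁ E₂) (B.par D) (graft t₁ t₂) := by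
  have hmap : ∀ {t : PTree Chan} {g : Proc Chan × ℝ → Proc Chan × ℝ} {i σ τ},
      (graft t₁ t₂).node (i :: σ) = (t.node (i :: τ)).map g →
      ((graft t₁ t₂).hasNode (i :: σ) ↔ t.hasNode (i :: τ)) := by
    intro t g i σ τ h
    unfold hasNode
    rw [h, Option.isSome_map]
  refine ⟨graft_silent h₁.1 h₂.1, ?_, ?_, ?_⟩
  · intro σ P p hL
    obtain ⟨L₁, p₁, L₂, p₂, h1, h2, rfl, -⟩ := graft_local h₂.1 hL
    exact .inr ⟨_, _, _, _, rfl, rfl, h₁.2.1 _ _ _ h1, h₂.2.1 _ _ _ h2⟩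
  · intro σ i P p P' p' hL hL' hlt
    obtain ⟨L₁, p₁, L₂, p₂, h1, h2, rfl, ⟨-, -, -, hc⟩ | ⟨-, -, hc⟩⟩ := graft_local h₂.1 hL
    · rw [hc, Option.map_eq_some_iff] at hL'
      obtain ⟨⟨Q, q⟩, hq, he⟩ := hL'
      simp only [Prod.mk.injEq] at he
      obtain ⟨rfl, rfl⟩ := he
      obtain ⟨n, ps, Ts, hcs, hn, hT⟩ := h₁.2.2.1 _ _ _ _ _ _ h1 hq hlt
      refine ⟨n, ps, _, CStep.parL hcs, fun j => by rw [hmap (hc j), hn], fun j => ?_⟩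
      obtain ⟨C, hC, hN⟩ := hT j
      exact ⟨C.par L₂, by simp [Proc.par, hC], by rw [hc, hN]; rfl⟩
    · rw [hc, Option.map_eq_some_iff] at hL'
      obtain ⟨⟨Q, q⟩, hq, he⟩ := hL'
      simp only [Prod.mk.injEq] at he
      obtain ⟨rfl, rfl⟩ := he
      obtain ⟨n, ps, Ts, hcs, hn, hT⟩ := h₂.2.2.1 _ _ _ _ _ _ h2 hq hlt
      refine ⟨n, ps, _, CStep.parR hcs, fun j => by rw [hmap (hc j), hn], fun j => ?_⟩
      obtain ⟨C, hC, hN⟩ := hT j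
      exact ⟨L₁.par C, by simp [Proc.par, hC], by rw [hc, hN]; rfl⟩
  · intro σ i P p P' hL hL'
    obtain ⟨L₁, p₁, L₂, p₂, h1, h2, rfl, ⟨-, -, -, hc⟩ | ⟨-, -, hc⟩⟩ := graft_local h₂.1 hL
    · rw [hc, Option.map_eq_some_iff] at hL'
      obtain ⟨⟨Q, q⟩, hq, he⟩ := hL'
      simp only [Prod.mk.injEq] at he
      obtain ⟨rfl, rfl⟩ := he
      have := h₁.2.2.2 _ _ _ _ _ h1 hq
      exact ⟨Step.parL this.1, this.2.1, by rw [hmap (hc 1)]; exact this.2.2⟩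
    · rw [hc, Option.map_eq_some_iff] at hL'
      obtain ⟨⟨Q, q⟩, hq, he⟩ := hL'
      simp only [Prod.mk.injEq] at he
      obtain ⟨rfl, rfl⟩ := he
      have := h₂.2.2.2 _ _ _ _ _ h2 hq
      exact ⟨Step.parR this.1, this.2.1, by rw [hmap (hc 1)]; exact this.2.2⟩

theorem graft_leaf (h₂ : IsSilentTree D t₂) {σ} : (graft t₁ t₂).IsLeaf σ ↔
    t₁.IsLeaf (dec t₁ σ).1 ∧ t₂.IsLeaf (dec t₁ σ).2 := by
  by_cases hs : (graft t₁ t₂).hasNode σ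
  · have hn := graft_hasNode.1 hs
    obtain ⟨L, p, hL⟩ := hasNode_iff.1 hs
    obtain ⟨L₁, p₁, L₂, p₂, h1, h2, rfl, ⟨h0, hb, -, hc⟩ | ⟨h0, -, hc⟩⟩ := graft_local h₂ hL
    · have : (graft t₁ t₂).hasNode (0 :: σ) := by
        unfold hasNode
        rw [hc, Option.isSome_map]
        exact h0
      simp [IsLeaf, this, h0]
    · have : (graft t₁ t₂).hasNode (0 :: σ) ↔ t₂.hasNode (0 :: (dec t₁ σ).2) := by
        unfold hasNode
        rw [hc, Option.isSome_map]
      simp [IsLeaf, this, h0, hs, hn]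
  · have hn := mt graft_hasNode.2 hs
    unfold IsLeaf
    tauto

theorem graft_pathProb (h₁ : IsSilentTree B t₁) (h₂ : IsSilentTree D t₂) {σ}
    (hs : (graft t₁ t₂).hasNode σ) : (graft t₁ t₂).pathProb σ =
      t₁.pathProb (dec t₁ σ).1 * t₂.pathProb (dec t₁ σ).2 := by
  induction σ with
  | nil => simp [dec, pathProb]
  | cons i σ ih =>
    have hs' := (graft_silent h₁ h₂).2.1 _ _ hs
    have ih := ih hs'
    obtain ⟨L, p, hL⟩ := hasNode_iff.1 hs'
    obtain ⟨L₁, p₁, L₂, p₂, h1, h2, rfl, ⟨h0, hb, hd, hc⟩ | ⟨h0, hd, hc⟩⟩ := graft_local h₂ hL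
    · rw [hd]
      rw [hb] at ih
      simp only [pathProb, mul_one] at ih ⊢
      rw [ih]
      congr 1
      simp only [edgeProb, hc, Option.map_map]
      rfl
    · rw [hd]
      simp only [pathProb]
      rw [ih]
      have : (graft t₁ t₂).edgeProb (i :: σ) = t₂.edgeProb (i :: (dec t₁ σ).2) := by
        simp only [edgeProb, hc, Option.map_map]
        rfl
      rw [this]
      ring

theorem graft_le (h₁ : IsSilentTree B t₁) (h₂ : IsSilentTree D t₂) (k : ℕ) :
    (graft t₁ t₂).finBranchProb k ≤ t₁.finBranchProb k * t₂.finBranchProb k := by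
  obtain ⟨s, hs, he⟩ := fbp_eq (graft_silent h₁ h₂) k
  obtain ⟨s₁, hs₁, he₁⟩ := fbp_eq h₁ k
  obtain ⟨s₂, hs₂, he₂⟩ := fbp_eq h₂ k
  rw [he, he₁, he₂, Finset.sum_mul_sum, ← Finset.sum_product']
  have hinj : Set.InjOn (dec t₁) s := by
    intro x _ y _ h
    rw [← dec_append t₁ x, ← dec_append t₁ y, h]
  calc ∑ σ ∈ s, (graft t₁ t₂).pathProb σ
      = ∑ σ ∈ s, t₁.pathProb (dec t₁ σ).1 * t₂.pathProb (dec t₁ σ).2 :=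
        Finset.sum_congr rfl fun σ hσ => graft_pathProb h₁ h₂ ((hs σ).1 hσ).1.1
    _ = ∑ x ∈ s.image (dec t₁), t₁.pathProb x.1 * t₂.pathProb x.2 := by
        rw [Finset.sum_image hinj]
    _ ≤ _ := by
        refine Finset.sum_le_sum_of_subset_of_nonneg ?_ ?_
        · intro x hx
          obtain ⟨σ, hσ, rfl⟩ := Finset.mem_image.1 hx
          obtain ⟨hl, hk⟩ := (hs σ).1 hσ
          have hl := (graft_leaf h₂).1 hl
          have hlen := congrArg List.length (dec_append t₁ σ)
          rw [List.length_append] at hlen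
          exact Finset.mem_product.2 ⟨(hs₁ _).2 ⟨hl.1, by omega⟩, (hs₂ _).2 ⟨hl.2, by omega⟩⟩
        · intro x hx _
          have hx := Finset.mem_product.1 hx
          exact mul_nonneg (pathProb_pos h₁ ((hs₁ _).1 hx.1).1.1).le
            (pathProb_pos h₂ ((hs₂ _).1 hx.2).1.1).le

theorem graft_ge (h₁ : IsSilentTree B t₁) (h₂ : IsSilentTree D t₂) (k m : ℕ) (hkm : 2 * k ≤ m) :
    t₁.finBranchProb k * t₂.finBranchProb k ≤ (graft t₁ t₂).finBranchProb m := by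
  obtain ⟨s, hs, he⟩ := fbp_eq (graft_silent h₁ h₂) m
  obtain ⟨s₁, hs₁, he₁⟩ := fbp_eq h₁ k
  obtain ⟨s₂, hs₂, he₂⟩ := fbp_eq h₂ k
  rw [he, he₁, he₂, Finset.sum_mul_sum, ← Finset.sum_product']
  have hinj : Set.InjOn (dec t₁) s := by
    intro x _ y _ h
    rw [← dec_append t₁ x, ← dec_append t₁ y, h]
  have e1 : ∑ σ ∈ s, (graft t₁ t₂).pathProb σ =
      ∑ x ∈ s.image (dec t₁), t₁.pathProb x.1 * t₂.pathProb x.2 := by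
    rw [Finset.sum_image hinj]
    exact Finset.sum_congr rfl fun σ hσ => graft_pathProb h₁ h₂ ((hs σ).1 hσ).1.1
  rw [e1]
  refine Finset.sum_le_sum_of_subset_of_nonneg ?_ ?_
  · rintro ⟨a, b⟩ hx
    have hx := Finset.mem_product.1 hx
    obtain ⟨ha, hak⟩ := (hs₁ _).1 hx.1
    obtain ⟨hb, hbk⟩ := (hs₂ _).1 hx.2
    have hd := dec_leaf h₁ ha b
    simp only at hd hb hak hbk
    refine Finset.mem_image.2 ⟨b ++ a, (hs _).2 ⟨(graft_leaf h₂).2 ?_, ?_⟩, hd⟩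
    · rw [hd]; exact ⟨ha, hb⟩
    · rw [List.length_append]; omega
  · intro x hx _
    obtain ⟨σ, hσ, rfl⟩ := Finset.mem_image.1 hx
    have hl := (graft_leaf h₂).1 ((hs σ).1 hσ).1
    exact mul_nonneg (pathProb_pos h₁ hl.1.1).le (pathProb_pos h₂ hl.2.1).le

theorem graft_regular (h₁ : IsSilentTree B t₁) (h₂ : IsSilentTree D t₂)
    (r₁ : t₁.Regular) (r₂ : t₂.Regular) : (graft t₁ t₂).Regular := by
  have hu : Tendsto (fun k => t₁.finBranchProb k * t₂.finBranchProb k) atTop (nhds 1) := by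
    simpa using Tendsto.mul r₁ r₂
  have hdiv : Tendsto (fun k : ℕ => k / 2) atTop atTop :=
    Nat.tendsto_div_const_atTop (by norm_num)
  exact tendsto_of_tendsto_of_tendsto_of_le_of_le (hu.comp hdiv) hu
    (fun k => graft_ge h₁ h₂ (k / 2) k (by omega)) (fun k => graft_le h₁ h₂ k)

theorem graft_exists (h₁ : IsETree E₁ B t₁) (h₂ : IsETree E₂ D t₂)
    (r₁ : t₁.Regular) (r₂ : t₂.Regular) : ∃ g, IsETree (PE E₁ E₂) (B.par D) g ∧ g.Regular ∧
      ∀ σ L p, g.node σ = some (L, p) → ¬ g.hasNode (0 :: σ) →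
        ∃ σ₁ L₁ p₁ σ₂ L₂ p₂, t₁.node σ₁ = some (L₁, p₁) ∧ ¬ t₁.hasNode (0 :: σ₁) ∧
          t₂.node σ₂ = some (L₂, p₂) ∧ ¬ t₂.hasNode (0 :: σ₂) ∧ L = L₁.par L₂ := by
  refine ⟨graft t₁ t₂, graft_etree h₁ h₂, graft_regular h₁.1 h₂.1 r₁ r₂, fun σ L p hL h0 => ?_⟩
  have hl := (graft_leaf h₂.1).1 ⟨hasNode_iff.2 ⟨_, _, hL⟩, h0⟩
  obtain ⟨L₁, p₁, L₂, p₂, h1, h2, rfl, -⟩ := graft_local h₂.1 hL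
  exact ⟨_, _, _, _, _, _, h1, hl.1.2, h2, hl.2.2, rfl⟩

end tree

section main
variable {E E₁ E₂ : Proc Chan → Proc Chan → Prop}

theorem PE_equiv (h₁ : Equivalence E₁) (h₂ : Equivalence E₂) : Equivalence (PE E₁ E₂) := by
  refine ⟨fun _ => .inl rfl, ?_, ?_⟩
  · rintro P Q (rfl | ⟨A, B, C, D, rfl, rfl, h, h'⟩)
    · exact .inl rfl
    · exact .inr ⟨_, _, _, _, rfl, rfl, h₁.symm h, h₂.symm h'⟩
  · rintro P Q R (rfl | ⟨A, B, C, D, rfl, rfl, h, h'⟩) hQ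
    · exact hQ
    · rcases hQ with rfl | ⟨B', F, D', G, he, rfl, hF, hG⟩
      · exact .inr ⟨_, _, _, _, rfl, rfl, h, h'⟩
      · obtain ⟨rfl, rfl⟩ := par_inj he
        exact .inr ⟨_, _, _, _, rfl, rfl, h₁.trans h hF, h₂.trans h' hG⟩

theorem PE_par (h₁ : Equivalence E₁) (h₂ : Equivalence E₂) {A C Q : Proc Chan} :
    PE E₁ E₂ (A.par C) Q ↔ ∃ B D, Q = B.par D ∧ E₁ A B ∧ E₂ C D := by
  constructor
  · rintro (rfl | ⟨A', B, C', D, he, rfl, h, h'⟩)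
    · exact ⟨A, C, rfl, h₁.refl _, h₂.refl _⟩
    · obtain ⟨rfl, rfl⟩ := par_inj he
      exact ⟨B, D, rfl, h, h'⟩
  · rintro ⟨B, D, rfl, h, h'⟩
    exact .inr ⟨_, _, _, _, rfl, rfl, h, h'⟩

theorem PE_mk {A B C D : Proc Chan} (h : E₁ A B) (h' : E₂ C D) :
    PE E₁ E₂ (A.par C) (B.par D) := .inr ⟨_, _, _, _, rfl, rfl, h, h'⟩

theorem class_eq (h : Equivalence E) {A B : Proc Chan} (hAB : E A B) : classOf E A = classOf E B := by
  ext Q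
  exact ⟨fun hQ => h.trans (h.symm hAB) hQ, fun hQ => h.trans hAB hQ⟩

theorem class_of_mem (h : Equivalence E) {C : Set (Proc Chan)} (hC : IsClass E C) {P} (hP : P ∈ C) :
    C = classOf E P := by
  obtain ⟨A, rfl⟩ := hC
  exact class_eq h hP

theorem ltrans_step (h : Equivalence E) {A A' : Proc Chan} {l : Lab Chan}
    (hs : Step A.val l A'.val) : LTrans E A l (classOf E A') := by
  refine ⟨triv A, triv_etree h, triv_regular A, fun σ L p hL _ => ?_⟩
  obtain ⟨-, rfl, -⟩ := triv_node.1 hL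
  exact ⟨A', h.refl _, hs⟩

theorem ltrans_par (h₁ : IsBB E₁) (h₂ : IsBB E₂) {A B C D : Proc Chan} {l : Lab Chan}
    {K : Set (Proc Chan)} (hl : l.IsAct) (hK : IsClass (PE E₁ E₂) K) (hAB : E₁ A B) (hCD : E₂ C D)
    (hne : l ≠ Lab.tau 1 ∨ K ≠ classOf (PE E₁ E₂) (A.par C))
    (ht : LTrans (PE E₁ E₂) (A.par C) l K) : LTrans (PE E₁ E₂) (B.par D) l K := by
  have hE := PE_equiv h₁.1 h₂.1
  obtain ⟨t, hte, htr, hleaf⟩ := ht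
  obtain ⟨σ, hσ, h0⟩ := exists_leaf htr
  obtain ⟨L, p, hL⟩ := hasNode_iff.1 hσ
  obtain ⟨L', hL', hstep⟩ := hleaf _ _ _ hL h0
  have hAL := hte.2.1 _ _ _ hL
  rw [class_eq hE hAL] at hne
  obtain ⟨A₁, C₁, rfl, hA₁, hC₁⟩ := (PE_par h₁.1 h₂.1).1 hAL
  have hB : E₁ A₁ B := h₁.1.trans (h₁.1.symm hA₁) hAB
  have hD : E₂ C₁ D := h₂.1.trans (h₂.1.symm hC₁) hCD
  obtain rfl := class_of_mem hE hK hL'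
  rcases step_par_inv hstep with ⟨A', rfl, h⟩ | ⟨C', rfl, h⟩ | ⟨rfl, A', C', k, k', rfl, hco, hk, hk'⟩
  · have hne' : l ≠ Lab.tau 1 ∨ classOf E₁ A' ≠ classOf E₁ A₁ := by
      refine hne.imp id fun hne he => hne ?_
      refine class_eq hE (PE_mk ?_ (h₂.1.refl _))
      have : A₁ ∈ classOf E₁ A' := by rw [he]; exact h₁.1.refl _
      exact this
    obtain ⟨t₁, e₁, r₁, l₁⟩ := h₁.2.1 _ _ _ _ hl ⟨A', rfl⟩ hB hne' (ltrans_step h₁.1 h)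
    obtain ⟨g, ge, gr, gl⟩ := graft_exists e₁ (triv_etree (A := D) h₂.1) r₁ (triv_regular D)
    refine ⟨g, ge, gr, fun σ L p hL h0 => ?_⟩
    obtain ⟨σ₁, L₁, p₁, σ₂, L₂, p₂, n1, n2, n3, n4, rfl⟩ := gl _ _ _ hL h0
    obtain ⟨-, rfl, -⟩ := triv_node.1 n3
    obtain ⟨M, hM, hs⟩ := l₁ _ _ _ n1 n2
    exact ⟨M.par L₂, PE_mk hM hD, Step.parL hs⟩
  · have hne' : l ≠ Lab.tau 1 ∨ classOf E₂ C' ≠ classOf E₂ C₁ := by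
      refine hne.imp id fun hne he => hne ?_
      refine class_eq hE (PE_mk (h₁.1.refl _) ?_)
      have : C₁ ∈ classOf E₂ C' := by rw [he]; exact h₂.1.refl _
      exact this
    obtain ⟨t₂, e₂, r₂, l₂⟩ := h₂.2.1 _ _ _ _ hl ⟨C', rfl⟩ hD hne' (ltrans_step h₂.1 h)
    obtain ⟨g, ge, gr, gl⟩ := graft_exists (triv_etree (A := B) h₁.1) e₂ (triv_regular B) r₂
    refine ⟨g, ge, gr, fun σ L p hL h0 => ?_⟩
    obtain ⟨σ₁, L₁, p₁, σ₂, L₂, p₂, n1, n2, n3, n4, rfl⟩ := gl _ _ _ hL h0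
    obtain ⟨-, rfl, -⟩ := triv_node.1 n1
    obtain ⟨M, hM, hs⟩ := l₂ _ _ _ n3 n4
    exact ⟨L₁.par M, PE_mk hB hM, Step.parR hs⟩
  · have hact : k.IsAct ∧ k ≠ .tau 1 ∧ k'.IsAct ∧ k' ≠ .tau 1 := by
      obtain ⟨a, ⟨rfl, rfl⟩ | ⟨rfl, rfl⟩⟩ := hco <;> simp [Lab.IsAct]
    obtain ⟨t₁, e₁, r₁, l₁⟩ :=
      h₁.2.1 _ _ _ _ hact.1 ⟨A', rfl⟩ hB (.inl hact.2.1) (ltrans_step h₁.1 hk)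
    obtain ⟨t₂, e₂, r₂, l₂⟩ :=
      h₂.2.1 _ _ _ _ hact.2.2.1 ⟨C', rfl⟩ hD (.inl hact.2.2.2) (ltrans_step h₂.1 hk')
    obtain ⟨g, ge, gr, gl⟩ := graft_exists e₁ e₂ r₁ r₂
    refine ⟨g, ge, gr, fun σ L p hL h0 => ?_⟩
    obtain ⟨σ₁, L₁, p₁, σ₂, L₂, p₂, n1, n2, n3, n4, rfl⟩ := gl _ _ _ hL h0
    obtain ⟨M, hM, hs⟩ := l₁ _ _ _ n1 n2
    obtain ⟨N, hN, hs'⟩ := l₂ _ _ _ n3 n4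
    exact ⟨M.par N, PE_mk hM hN, hco.step hs hs'⟩

theorem inC_parL (h₁ : Equivalence E₁) (h₂ : Equivalence E₂) {X Y D : Proc Chan} (hY : E₂ Y D)
    (S : Tm Chan) : inC (classOf (PE E₁ E₂) (X.par Y)) (.par S D.val) ↔ inC (classOf E₁ X) S := by
  constructor
  · rintro ⟨P, hP, he⟩
    obtain ⟨B, D', rfl, hB, hD⟩ := (PE_par h₁ h₂).1 hP
    simp only [Proc.par, Tm.par.injEq] at he
    exact ⟨B, hB, he.1⟩
  · rintro ⟨B, hB, rfl⟩
    exact ⟨B.par D, PE_mk hB hY, rfl⟩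

theorem inC_parR (h₁ : Equivalence E₁) (h₂ : Equivalence E₂) {X Y D : Proc Chan} (hX : E₁ X D)
    (S : Tm Chan) : inC (classOf (PE E₁ E₂) (X.par Y)) (.par D.val S) ↔ inC (classOf E₂ Y) S := by
  constructor
  · rintro ⟨P, hP, he⟩
    obtain ⟨B, D', rfl, hB, hD⟩ := (PE_par h₁ h₂).1 hP
    simp only [Proc.par, Tm.par.injEq] at he
    exact ⟨D', hD, he.2⟩
  · rintro ⟨B, hB, rfl⟩
    exact ⟨D.par B, PE_mk hX hB, rfl⟩

theorem coll_parL (h₁ : Equivalence E₁) (h₂ : Equivalence E₂) {X Y D : Proc Chan} (hY : E₂ Y D)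
    {n : ℕ} (ps : Fin n → ℝ) (S : Fin n → Tm Chan) :
    collProb (classOf (PE E₁ E₂) (X.par Y)) ps (fun i => .par (S i) D.val) =
      collProb (classOf E₁ X) ps S := by
  unfold collProb
  simp only [inC_parL h₁ h₂ hY]

theorem coll_parR (h₁ : Equivalence E₁) (h₂ : Equivalence E₂) {X Y D : Proc Chan} (hX : E₁ X D)
    {n : ℕ} (ps : Fin n → ℝ) (S : Fin n → Tm Chan) :
    collProb (classOf (PE E₁ E₂) (X.par Y)) ps (fun i => .par D.val (S i)) =
      collProb (classOf E₂ Y) ps S := by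
  unfold collProb
  simp only [inC_parR h₁ h₂ hX]

theorem qtrans_step (h : Equivalence E) {A : Proc Chan} {q : ℝ} {K : Set (Proc Chan)}
    {n : ℕ} {ps : Fin n → ℝ} {Ts : Fin n → Tm Chan} (hs : CStep A.val n ps Ts)
    (hq : collProb K ps Ts / (1 - collProb (classOf E A) ps Ts) = q) : QTrans E A q K := by
  refine ⟨triv A, triv_etree h, triv_regular A, fun σ L p hL _ => ?_⟩
  obtain ⟨-, rfl, -⟩ := triv_node.1 hL
  exact ⟨n, ps, Ts, hs, hq⟩

theorem qtrans_par (h₁ : IsBB E₁) (h₂ : IsBB E₂) {A B C D : Proc Chan} {q : ℝ}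
    {K : Set (Proc Chan)} (hq : 0 < q) (hq1 : q ≤ 1)
    (hK : IsClass (PE E₁ E₂) K) (hAB : E₁ A B) (hCD : E₂ C D)
    (hne : K ≠ classOf (PE E₁ E₂) (A.par C))
    (ht : QTrans (PE E₁ E₂) (A.par C) q K) : QTrans (PE E₁ E₂) (B.par D) q K := by
  have hE := PE_equiv h₁.1 h₂.1
  obtain ⟨t, hte, htr, hleaf⟩ := ht
  obtain ⟨σ, hσ, h0⟩ := exists_leaf htr
  obtain ⟨L, p, hL⟩ := hasNode_iff.1 hσ
  obtain ⟨n, ps, Ts, hcs, hqe⟩ := hleaf _ _ _ hL h0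
  have hAL := hte.2.1 _ _ _ hL
  rw [class_eq hE hAL] at hne hqe
  obtain ⟨A₁, C₁, rfl, hA₁, hC₁⟩ := (PE_par h₁.1 h₂.1).1 hAL
  have hB : E₁ A₁ B := h₁.1.trans (h₁.1.symm hA₁) hAB
  have hD : E₂ C₁ D := h₂.1.trans (h₂.1.symm hC₁) hCD
  have hex : ∃ i, inC K (Ts i) := by
    by_contra hc
    push Not at hc
    simp only [collProb, hc, if_false, Finset.sum_const_zero, zero_div] at hqe
    linarith
  obtain ⟨i, P, hP, hPe⟩ := hex
  obtain rfl := class_of_mem hE hK hP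
  rcases cstep_par_inv hcs with ⟨S', rfl, hc⟩ | ⟨S', rfl, hc⟩
  · obtain ⟨A', C', -, hC', rfl⟩ := par_split hPe
    obtain rfl := proc_ext hC'
    rw [coll_parL h₁.1 h₂.1 (h₂.1.refl _), coll_parL h₁.1 h₂.1 (h₂.1.refl _)] at hqe
    have hne' : classOf E₁ A' ≠ classOf E₁ A₁ := by
      refine fun he => hne ?_
      refine class_eq hE (PE_mk ?_ (h₂.1.refl _))
      have : A₁ ∈ classOf E₁ A' := by rw [he]; exact h₁.1.refl _
      exact this
    obtain ⟨t₁, e₁, r₁, l₁⟩ := h₁.2.2 _ _ _ _ hq hq1 ⟨A', rfl⟩ hB hne' (qtrans_step h₁.1 hc hqe)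
    obtain ⟨g, ge, gr, gl⟩ := graft_exists e₁ (triv_etree (A := D) h₂.1) r₁ (triv_regular D)
    refine ⟨g, ge, gr, fun σ L p hL h0 => ?_⟩
    obtain ⟨σ₁, L₁, p₁, σ₂, L₂, p₂, n1, n2, n3, n4, rfl⟩ := gl _ _ _ hL h0
    obtain ⟨-, rfl, -⟩ := triv_node.1 n3
    obtain ⟨m, qs, Us, hM, hs⟩ := l₁ _ _ _ n1 n2
    refine ⟨m, qs, _, CStep.parL hM, ?_⟩
    rw [coll_parL h₁.1 h₂.1 hD, coll_parL h₁.1 h₂.1 (h₂.1.refl _), hs]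
  · obtain ⟨A', C', hA', -, rfl⟩ := par_split hPe
    obtain rfl := proc_ext hA'
    rw [coll_parR h₁.1 h₂.1 (h₁.1.refl _), coll_parR h₁.1 h₂.1 (h₁.1.refl _)] at hqe
    have hne' : classOf E₂ C' ≠ classOf E₂ C₁ := by
      refine fun he => hne ?_
      refine class_eq hE (PE_mk (h₁.1.refl _) ?_)
      have : C₁ ∈ classOf E₂ C' := by rw [he]; exact h₂.1.refl _
      exact this
    obtain ⟨t₁, e₁, r₁, l₁⟩ := h₂.2.2 _ _ _ _ hq hq1 ⟨C', rfl⟩ hD hne' (qtrans_step h₂.1 hc hqe)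
    obtain ⟨g, ge, gr, gl⟩ := graft_exists (triv_etree (A := B) h₁.1) e₁ (triv_regular B) r₁
    refine ⟨g, ge, gr, fun σ L p hL h0 => ?_⟩
    obtain ⟨σ₁, L₁, p₁, σ₂, L₂, p₂, n1, n2, n3, n4, rfl⟩ := gl _ _ _ hL h0
    obtain ⟨-, rfl, -⟩ := triv_node.1 n1
    obtain ⟨m, qs, Us, hM, hs⟩ := l₁ _ _ _ n3 n4
    refine ⟨m, qs, _, CStep.parR hM, ?_⟩
    rw [coll_parR h₁.1 h₂.1 hB, coll_parR h₁.1 h₂.1 (h₁.1.refl _), hs]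

theorem div_split {K : Set (Proc Chan)} {K₁ K₂ : Set (Proc Chan)} {A C : Proc Chan}
    (hK : ∀ P Q : Proc Chan, P.par Q ∈ K → P ∈ K₁ ∧ Q ∈ K₂)
    (hno : ∀ (P Q P' Q' : Proc Chan) (k k' : Lab Chan), P.par Q ∈ K → P'.par Q' ∈ K → Co k k' →
      Step P.val k P'.val → Step Q.val k' Q'.val → False)
    (hd : Div K (A.par C)) : Div K₁ A ∨ Div K₂ C := by
  obtain ⟨X, hX, hAC, hm⟩ := hd
  by_contra hcon
  push Not at hcon
  obtain ⟨hA, hC⟩ := hcon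
  apply hA
  refine ⟨{P | ∃ Q, P.par Q ∈ X ∧ ¬ Div K₂ Q}, ?_, ⟨C, hAC, hC⟩, ?_⟩
  · rintro P ⟨Q, hQ, -⟩
    exact (hK _ _ (hX hQ)).1
  · rintro P ⟨Q, hQ, hnd⟩
    by_contra hno1
    apply hnd
    refine ⟨{Q' | P.par Q' ∈ X ∧ ¬ Div K₂ Q'} ∪ {Q' | Div K₂ Q'}, ?_, .inl ⟨hQ, hnd⟩, ?_⟩
    · rintro Q' (⟨h, -⟩ | ⟨Y, hY, hQ', -⟩)
      · exact (hK _ _ (hX h)).2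
      · exact hY hQ'
    · rintro Q' (⟨h, hn⟩ | ⟨Y, hY, hQ', hYm⟩)
      · rcases (hm _ h).inv with ⟨P', Q'', k, k', h1, h2, h3, h4⟩ | h1 | h1
        · exact (hno _ _ _ _ _ _ (hX h) (hX h1) h2 h3 h4).elim
        · refine (hno1 (OneMove.mono ?_ h1)).elim
          intro P' hP'
          exact ⟨Q', hP', hn⟩
        · refine h1.mono fun Q'' hQ'' => ?_
          by_cases hdd : Div K₂ Q''
          · exact .inr hdd
          · exact .inl ⟨hQ'', hdd⟩
      · exact (hYm _ hQ').mono fun R hR => .inr ⟨Y, hY, hR, hYm⟩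

theorem ltrans_cases {A : Proc Chan} {l : Lab Chan} {K : Set (Proc Chan)} (h : LTrans E A l K) :
    OneMove (classOf E A) A ∨ ∃ A' ∈ K, Step A.val l A'.val := by
  obtain ⟨t, e, -, hl⟩ := h
  by_cases h0 : t.hasNode [0]
  · left
    refine (oneMove_of_tree e e.1.1 h0).mono ?_
    rintro Q ⟨τ, q, hQ⟩
    exact e.2.1 _ _ _ hQ
  · right
    exact hl _ _ _ e.1.1 h0

theorem codiv_par (h₁ : IsCBB E₁) (h₂ : IsCBB E₂) {A B C D : Proc Chan}
    (hAB : E₁ A B) (hCD : E₂ C D)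
    (h : ∃ t, IsETree (PE E₁ E₂) (A.par C) t ∧ t.Divergent) :
    ∃ t, IsETree (PE E₁ E₂) (B.par D) t ∧ t.Divergent := by
  have q₁ := h₁.1.1
  have q₂ := h₂.1.1
  have hE := PE_equiv q₁ q₂
  apply tree_of_div
  by_cases hcom : ∃ (P Q P' Q' : Proc Chan) (k k' : Lab Chan), P.par Q ∈ classOf (PE E₁ E₂) (A.par C) ∧
      P'.par Q' ∈ classOf (PE E₁ E₂) (A.par C) ∧ Co k k' ∧
      Step P.val k P'.val ∧ Step Q.val k' Q'.val
  · obtain ⟨P, Q, P', Q', k, k', m1, m2, hco, s1, s2⟩ := hcom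
    obtain ⟨_, _, he, hP, hQ⟩ := (PE_par q₁ q₂).1 m1
    obtain ⟨rfl, rfl⟩ := par_inj he
    obtain ⟨_, _, he, hP', hQ'⟩ := (PE_par q₁ q₂).1 m2
    obtain ⟨rfl, rfl⟩ := par_inj he
    have hact : k.IsAct ∧ k ≠ .tau 1 ∧ k'.IsAct ∧ k' ≠ .tau 1 := by
      obtain ⟨a, ⟨rfl, rfl⟩ | ⟨rfl, rfl⟩⟩ := hco <;> simp [Lab.IsAct]
    refine ⟨classOf (PE E₁ E₂) (B.par D), subset_rfl, hE.refl _, fun R hR => ?_⟩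
    obtain ⟨U, V, rfl, hU, hV⟩ := (PE_par q₁ q₂).1 hR
    have hAU := q₁.trans hAB hU
    have hCV := q₂.trans hCD hV
    rcases ltrans_cases (h₁.1.2.1 P U _ _ hact.1 ⟨P', rfl⟩ (q₁.trans (q₁.symm hP) hAU)
      (.inl hact.2.1) (ltrans_step q₁ s1)) with hm | ⟨U', hU', sU⟩
    · refine (hm.parL V).mono ?_
      rintro _ ⟨W, hW, rfl⟩
      exact PE_mk (q₁.trans hU hW) hV
    · rcases ltrans_cases (h₂.1.2.1 Q V _ _ hact.2.2.1 ⟨Q', rfl⟩ (q₂.trans (q₂.symm hQ) hCV)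
        (.inl hact.2.2.2) (ltrans_step q₂ s2)) with hm | ⟨V', hV', sV⟩
      · refine (hm.parR U).mono ?_
        rintro _ ⟨W, hW, rfl⟩
        exact PE_mk hU (q₂.trans hV hW)
      · refine .inl ⟨U'.par V', PE_mk ?_ ?_, hco.step sU sV⟩
        · exact q₁.trans (q₁.symm hAB) (q₁.trans hP' hU')
        · exact q₂.trans (q₂.symm hCD) (q₂.trans hQ' hV')
  · obtain ⟨t, e, d⟩ := h
    have hd := div_of_tree e d
    have := div_split (K₁ := classOf E₁ A) (K₂ := classOf E₂ C) (fun P Q hPQ => by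
      obtain ⟨_, _, he, hP, hQ⟩ := (PE_par q₁ q₂).1 hPQ
      obtain ⟨rfl, rfl⟩ := par_inj he
      exact ⟨hP, hQ⟩) (fun P Q P' Q' k k' a b c d e => hcom ⟨P, Q, P', Q', k, k', a, b, c, d, e⟩) hd
    rcases this with hdA | hdC
    · obtain ⟨t', e', d'⟩ := (h₁.2 _ _ hAB).1 (tree_of_div hdA)
      obtain ⟨X, hX, hB, hm⟩ := div_of_tree e' d'
      refine ⟨{R | ∃ P' ∈ X, R = P'.par D}, ?_, ⟨B, hB, rfl⟩, ?_⟩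
      · rintro _ ⟨P, hP, rfl⟩
        exact PE_mk (hX hP) (q₂.refl _)
      · rintro _ ⟨P, hP, rfl⟩
        exact (hm P hP).parL D
    · obtain ⟨t', e', d'⟩ := (h₂.2 _ _ hCD).1 (tree_of_div hdC)
      obtain ⟨X, hX, hB, hm⟩ := div_of_tree e' d'
      refine ⟨{R | ∃ P' ∈ X, R = B.par P'}, ?_, ⟨D, hB, rfl⟩, ?_⟩
      · rintro _ ⟨P, hP, rfl⟩
        exact PE_mk (q₁.refl _) (hX hP)
      · rintro _ ⟨P, hP, rfl⟩
        exact (hm P hP).parR B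

theorem PE_cbb (h₁ : IsCBB E₁) (h₂ : IsCBB E₂) : IsCBB (PE E₁ E₂) := by
  refine ⟨⟨PE_equiv h₁.1.1 h₂.1.1, ?_, ?_⟩, ?_⟩
  · rintro P Q l K hl hK (rfl | ⟨A, B, C, D, rfl, rfl, hAB, hCD⟩) hne ht
    · exact ht
    · exact ltrans_par h₁.1 h₂.1 hl hK hAB hCD hne ht
  · rintro P Q q K hq hq1 hK (rfl | ⟨A, B, C, D, rfl, rfl, hAB, hCD⟩) hne ht
    · exact ht
    · exact qtrans_par h₁.1 h₂.1 hq hq1 hK hAB hCD hne ht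
  · rintro P Q (rfl | ⟨A, B, C, D, rfl, rfl, hAB, hCD⟩)
    · exact Iff.rfl
    · exact ⟨codiv_par h₁ h₂ hAB hCD,
        codiv_par h₁ h₂ (h₁.1.1.symm hAB) (h₂.1.1.symm hCD)⟩

end main

end Aux

/-- `=_RCCS` is closed under parallel composition. -/
theorem rccsEq_par {Chan : Type} (A B C D : Proc Chan)
    (hAB : RccsEq A B) (hCD : RccsEq C D) : RccsEq (A.par C) (B.par D) := by
  obtain ⟨E₁, h₁, hA⟩ := hAB
  obtain ⟨E₂, h₂, hC⟩ := hCD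
  exact ⟨Aux.PE E₁ E₂, Aux.PE_cbb h₁ h₂, Aux.PE_mk hA hC⟩
end
end

section
/- The equality =_RCCS is closed under localization: for all RCCS processes A, B and every channel a, if A =_RCCS B then (a)A =_RCCS (a)B. (Equivalently, the equivalence closure of {((a)A, (a)B) | A =_RCCS B} ∪ =_RCCS is a codivergent branching bisimulation.) -/
/-!
Formalization of RCCS (Randomized CCS) following the paper
"A Uniform Framework for Probabilistic Process Models".
Channels form a type `Chan`; terms use de Bruijn indices for process variables.
-/

noncomputable section
open scoped Classical

variable {Chan : Type}

/-- The localization `(a)A` of a process. -/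
def Proc.loc (a : Chan) (A : Proc Chan) : Proc Chan :=
  ⟨.loc a A.val, A.prop.1, A.prop.2⟩

namespace RccsAux

theorem loc_inj {a : Chan} {A B : Proc Chan} (h : Proc.loc a A = Proc.loc a B) : A = B := by
  have h2 : Tm.loc a A.val = Tm.loc a B.val := congrArg Subtype.val h
  injection h2 with _ h3
  exact Subtype.ext h3

/-- the lifted equivalence -/
def LE (a : Chan) (E : Proc Chan → Proc Chan → Prop) (P Q : Proc Chan) : Prop :=
  P = Q ∨ ∃ A B, P = Proc.loc a A ∧ Q = Proc.loc a B ∧ E A B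

theorem LE_loc_left {a : Chan} {E : Proc Chan → Proc Chan → Prop} (hE : Equivalence E)
    {A P : Proc Chan} : LE a E (Proc.loc a A) P ↔ ∃ B, P = Proc.loc a B ∧ E A B := by
  constructor
  · rintro (h | ⟨A', B, h1, h2, h3⟩)
    · exact ⟨A, h.symm, hE.refl A⟩
    · rw [loc_inj h1]; exact ⟨B, h2, h3⟩
  · rintro ⟨B, h1, h2⟩
    exact Or.inr ⟨A, B, rfl, h1, h2⟩

theorem LE_loc {a : Chan} {E : Proc Chan → Proc Chan → Prop} (hE : Equivalence E)
    {A B : Proc Chan} : LE a E (Proc.loc a A) (Proc.loc a B) ↔ E A B := by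
  rw [LE_loc_left hE]
  constructor
  · rintro ⟨B', h, h2⟩; rw [loc_inj h]; exact h2
  · intro h; exact ⟨B, rfl, h⟩

theorem LE_equiv {a : Chan} {E : Proc Chan → Proc Chan → Prop} (hE : Equivalence E) :
    Equivalence (LE a E) := by
  refine ⟨fun _ => Or.inl rfl, ?_, ?_⟩
  · rintro x y (h | ⟨A, B, h1, h2, h3⟩)
    · exact Or.inl h.symm
    · exact Or.inr ⟨B, A, h2, h1, hE.symm h3⟩
  · rintro x y z (h | ⟨A, B, h1, h2, h3⟩) hyz
    · rw [h]; exact hyz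
    · subst h1 h2
      obtain ⟨C, rfl, h4⟩ := (LE_loc_left hE).1 hyz
      exact (LE_loc hE).2 (hE.trans h3 h4)

theorem step_loc {a : Chan} {T U : Tm Chan} {l : Lab Chan} (h : Step (.loc a T) l U) :
    ∃ T', U = .loc a T' ∧ Step T l T' ∧ l ≠ .name a ∧ l ≠ .coname a := by
  cases h with
  | loc _ h1 h2 h3 => exact ⟨_, rfl, h1, h2, h3⟩

theorem cstep_loc {a : Chan} {T : Tm Chan} {n : ℕ} {ps : Fin n → ℝ} {U : Fin n → Tm Chan}
    (h : CStep (.loc a T) n ps U) :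
    ∃ T', U = (fun i => .loc a (T' i)) ∧ CStep T n ps T' := by
  cases h with
  | loc _ h1 => exact ⟨_, rfl, h1⟩

theorem step_loc_tau {a : Chan} {T T' : Tm Chan} {p : ℝ} :
    Step (.loc a T) (.tau p) (.loc a T') ↔ Step T (.tau p) T' := by
  constructor
  · intro h
    obtain ⟨T'', h1, h2, _⟩ := step_loc h
    injection h1 with _ h3
    rw [h3]; exact h2
  · intro h
    exact Step.loc a h (by simp) (by simp)

/-- lifting of trees -/
def locT (a : Chan) (t : PTree Chan) : PTree Chan :=
  ⟨fun σ => (t.node σ).map (fun x => (Proc.loc a x.1, x.2))⟩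

theorem locT_node {a : Chan} {t : PTree Chan} {σ : List ℕ} {P : Proc Chan} {p : ℝ} :
    (locT a t).node σ = some (P, p) ↔ ∃ B, P = Proc.loc a B ∧ t.node σ = some (B, p) := by
  unfold locT
  constructor
  · intro h
    obtain ⟨⟨B, q⟩, h1, h2⟩ := Option.map_eq_some_iff.1 h
    injection h2 with h3 h4
    dsimp only at h3 h4
    subst h3 h4
    exact ⟨B, rfl, h1⟩
  · rintro ⟨B, rfl, h⟩
    simp [h]

theorem locT_node' {a : Chan} {t : PTree Chan} {σ : List ℕ} {B : Proc Chan} {p : ℝ} :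
    (locT a t).node σ = some (Proc.loc a B, p) ↔ t.node σ = some (B, p) := by
  rw [locT_node]
  constructor
  · rintro ⟨B', h, h2⟩; rw [loc_inj h]; exact h2
  · intro h; exact ⟨B, rfl, h⟩

theorem locT_hasNode (a : Chan) (t : PTree Chan) : (locT a t).hasNode = t.hasNode := by
  funext σ
  simp [PTree.hasNode, locT]

theorem locT_edgeProb (a : Chan) (t : PTree Chan) : (locT a t).edgeProb = t.edgeProb := by
  funext σ
  simp [PTree.edgeProb, locT, Function.comp_def]

theorem locT_pathProb (a : Chan) (t : PTree Chan) : (locT a t).pathProb = t.pathProb := by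
  funext σ
  induction σ with
  | nil => rfl
  | cons i σ ih => simp only [PTree.pathProb, locT_edgeProb, ih]

theorem locT_fin (a : Chan) (t : PTree Chan) : (locT a t).finBranchProb = t.finBranchProb := by
  funext k
  have hl : (locT a t).IsLeaf = t.IsLeaf := by
    funext σ
    simp only [PTree.IsLeaf, locT_hasNode]
  unfold PTree.finBranchProb
  rw [hl, locT_pathProb]

theorem locT_regular (a : Chan) (t : PTree Chan) : (locT a t).Regular ↔ t.Regular := by
  simp only [PTree.Regular, locT_fin]

theorem locT_divergent (a : Chan) (t : PTree Chan) : (locT a t).Divergent ↔ t.Divergent := by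
  simp only [PTree.Divergent, locT_fin]

theorem locT_etree {a : Chan} {E : Proc Chan → Proc Chan → Prop} (hE : Equivalence E)
    {A : Proc Chan} {t : PTree Chan} :
    IsETree (LE a E) (Proc.loc a A) (locT a t) ↔ IsETree E A t := by
  unfold IsETree IsSilentTree
  simp only [locT_hasNode, locT_node']
  constructor
  · rintro ⟨⟨h1, h2, h3, h4, h5⟩, h6, h7, h8⟩
    refine ⟨⟨h1, h2, h3, h4, ?_⟩, ?_, ?_, ?_⟩
    · intro σ i B p B' p' hB hB'
      obtain ⟨x, y, z⟩ := h5 σ i _ p _ p' (locT_node'.2 hB) (locT_node'.2 hB')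
      exact ⟨x, y, step_loc_tau.1 z⟩
    · intro σ B p hB
      exact (LE_loc hE).1 (h6 σ _ p (locT_node'.2 hB))
    · intro σ i B p B' q hB hB' hq
      obtain ⟨n, ps, Ts, hc, hn, hT⟩ := h7 σ i _ p _ q (locT_node'.2 hB) (locT_node'.2 hB') hq
      obtain ⟨T', rfl, hc'⟩ := cstep_loc hc
      refine ⟨n, ps, T', hc', hn, fun j => ?_⟩
      obtain ⟨C, hC, hCn⟩ := hT j
      obtain ⟨C', rfl, hC'⟩ := locT_node.1 hCn
      refine ⟨C', ?_, hC'⟩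
      have hC2 : Tm.loc a C'.val = Tm.loc a (T' j) := hC
      injection hC2
    · intro σ i B p B' hB hB'
      obtain ⟨x, y⟩ := h8 σ i _ p _ (locT_node'.2 hB) (locT_node'.2 hB')
      exact ⟨step_loc_tau.1 x, y⟩
  · rintro ⟨⟨h1, h2, h3, h4, h5⟩, h6, h7, h8⟩
    refine ⟨⟨h1, h2, h3, h4, ?_⟩, ?_, ?_, ?_⟩
    · intro σ i P p P' p' hP hP'
      obtain ⟨B, rfl, hB⟩ := locT_node.1 hP
      obtain ⟨B', rfl, hB'⟩ := locT_node.1 hP'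
      obtain ⟨x, y, z⟩ := h5 σ i _ p _ p' hB hB'
      exact ⟨x, y, step_loc_tau.2 z⟩
    · intro σ P p hP
      obtain ⟨B, rfl, hB⟩ := locT_node.1 hP
      exact (LE_loc hE).2 (h6 σ _ p hB)
    · intro σ i P p P' q hP hP' hq
      obtain ⟨B, rfl, hB⟩ := locT_node.1 hP
      obtain ⟨B', rfl, hB'⟩ := locT_node.1 hP'
      obtain ⟨n, ps, Ts, hc, hn, hT⟩ := h7 σ i _ p _ q hB hB' hq
      refine ⟨n, ps, _, CStep.loc a hc, hn, fun j => ?_⟩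
      obtain ⟨C, hC, hCn⟩ := hT j
      exact ⟨Proc.loc a C, congrArg (Tm.loc a) hC, locT_node'.2 hCn⟩
    · intro σ i P p P' hP hP'
      obtain ⟨B, rfl, hB⟩ := locT_node.1 hP
      obtain ⟨B', rfl, hB'⟩ := locT_node.1 hP'
      obtain ⟨x, y⟩ := h8 σ i _ p _ hB hB'
      exact ⟨step_loc_tau.2 x, y⟩

theorem exists_locT {a : Chan} {E : Proc Chan → Proc Chan → Prop} (hE : Equivalence E)
    {A : Proc Chan} {t : PTree Chan} (h : IsETree (LE a E) (Proc.loc a A) t) :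
    ∃ s, t = locT a s ∧ IsETree E A s := by
  have key : ∀ σ, ∃ o : Option (Proc Chan × ℝ),
      t.node σ = o.map (fun x => (Proc.loc a x.1, x.2)) := by
    intro σ
    cases hσ : t.node σ with
    | none => exact ⟨none, rfl⟩
    | some x =>
      obtain ⟨P, p⟩ := x
      obtain ⟨B, rfl, _⟩ := (LE_loc_left hE).1 (h.2.1 σ P p hσ)
      exact ⟨some (B, p), rfl⟩
  choose f hf using key
  have ht : t = locT a ⟨f⟩ := by
    cases t with
    | mk node =>
      simp only [locT, PTree.mk.injEq]
      funext σ
      exact hf σ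
  refine ⟨⟨f⟩, ht, ?_⟩
  rw [ht] at h
  exact (locT_etree hE).1 h

theorem exists_leaf {t : PTree Chan} (h : t.Regular) :
    ∃ σ L p, t.node σ = some (L, p) ∧ ¬ t.hasNode (0 :: σ) := by
  by_contra hc
  have h0 : t.finBranchProb = fun _ => 0 := by
    funext k
    unfold PTree.finBranchProb
    have : ∀ σ, ¬ (t.IsLeaf σ ∧ σ.length ≤ k) := by
      rintro σ ⟨⟨h1, h2⟩, _⟩
      obtain ⟨⟨L, p⟩, hL⟩ := Option.isSome_iff_exists.1 h1
      exact hc ⟨σ, L, p, hL, h2⟩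
    simp [this]
  unfold PTree.Regular at h
  rw [h0] at h
  exact zero_ne_one (tendsto_nhds_unique tendsto_const_nhds h)

theorem mem_class {a : Chan} {E : Proc Chan → Proc Chan → Prop} (hE : Equivalence E)
    {D X : Proc Chan} : Proc.loc a X ∈ classOf (LE a E) (Proc.loc a D) ↔ X ∈ classOf E D :=
  LE_loc hE

theorem class_loc {a : Chan} {E : Proc Chan → Proc Chan → Prop} (hE : Equivalence E)
    {C : Set (Proc Chan)} (hC : IsClass (LE a E) C) {X : Proc Chan} (hX : Proc.loc a X ∈ C) :
    C = classOf (LE a E) (Proc.loc a X) := by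
  obtain ⟨P, rfl⟩ := hC
  have hX' : LE a E P (Proc.loc a X) := hX
  ext Q
  exact ⟨fun h => (LE_equiv hE).trans ((LE_equiv hE).symm hX') h,
    fun h => (LE_equiv hE).trans hX' h⟩

theorem inC_loc {a : Chan} {E : Proc Chan → Proc Chan → Prop} (hE : Equivalence E)
    {D : Proc Chan} {T : Tm Chan} :
    inC (classOf (LE a E) (Proc.loc a D)) (.loc a T) ↔ inC (classOf E D) T := by
  constructor
  · rintro ⟨P, hP, hT⟩
    obtain ⟨B, rfl, hB⟩ := (LE_loc_left hE).1 hP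
    refine ⟨B, hB, ?_⟩
    have h2 : Tm.loc a B.val = Tm.loc a T := hT
    injection h2
  · rintro ⟨P, hP, rfl⟩
    exact ⟨Proc.loc a P, (mem_class hE).2 hP, rfl⟩

theorem collProb_loc {a : Chan} {E : Proc Chan → Proc Chan → Prop} (hE : Equivalence E)
    {D : Proc Chan} {n : ℕ} (ps : Fin n → ℝ) (Ts : Fin n → Tm Chan) :
    collProb (classOf (LE a E) (Proc.loc a D)) ps (fun i => .loc a (Ts i)) =
      collProb (classOf E D) ps Ts := by
  simp only [collProb, inC_loc hE]

theorem LTrans_loc {a : Chan} {E : Proc Chan → Proc Chan → Prop} (hE : Equivalence E)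
    {A D : Proc Chan} {l : Lab Chan} (h1 : l ≠ .name a) (h2 : l ≠ .coname a) :
    LTrans (LE a E) (Proc.loc a A) l (classOf (LE a E) (Proc.loc a D)) ↔
      LTrans E A l (classOf E D) := by
  constructor
  · rintro ⟨t, ht, hr, hl⟩
    obtain ⟨s, rfl, hs⟩ := exists_locT hE ht
    refine ⟨s, hs, (locT_regular a s).1 hr, fun σ L p hL hn => ?_⟩
    rw [locT_hasNode] at hl
    obtain ⟨P, hP, hS⟩ := hl σ _ p (locT_node'.2 hL) hn
    obtain ⟨B, rfl, hB⟩ := (LE_loc_left hE).1 hP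
    obtain ⟨T', e, hS', _⟩ := step_loc hS
    refine ⟨B, hB, ?_⟩
    have e2 : Tm.loc a B.val = Tm.loc a T' := e
    injection e2 with _ e3
    rw [e3]; exact hS'
  · rintro ⟨s, hs, hr, hl⟩
    refine ⟨locT a s, (locT_etree hE).2 hs, (locT_regular a s).2 hr, fun σ P p hP hn => ?_⟩
    rw [locT_hasNode] at hn
    obtain ⟨L, rfl, hL⟩ := locT_node.1 hP
    obtain ⟨B, hB, hS⟩ := hl σ L p hL hn
    exact ⟨Proc.loc a B, (mem_class hE).2 hB, Step.loc a hS h1 h2⟩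

theorem QTrans_loc {a : Chan} {E : Proc Chan → Proc Chan → Prop} (hE : Equivalence E)
    {A D : Proc Chan} {q : ℝ} :
    QTrans (LE a E) (Proc.loc a A) q (classOf (LE a E) (Proc.loc a D)) ↔
      QTrans E A q (classOf E D) := by
  constructor
  · rintro ⟨t, ht, hr, hl⟩
    obtain ⟨s, rfl, hs⟩ := exists_locT hE ht
    refine ⟨s, hs, (locT_regular a s).1 hr, fun σ L p hL hn => ?_⟩
    rw [locT_hasNode] at hl
    obtain ⟨n, ps, Ts, hc, hq⟩ := hl σ _ p (locT_node'.2 hL) hn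
    obtain ⟨T', rfl, hc'⟩ := cstep_loc hc
    rw [collProb_loc hE, collProb_loc hE] at hq
    exact ⟨n, ps, T', hc', hq⟩
  · rintro ⟨s, hs, hr, hl⟩
    refine ⟨locT a s, (locT_etree hE).2 hs, (locT_regular a s).2 hr, fun σ P p hP hn => ?_⟩
    rw [locT_hasNode] at hn
    obtain ⟨L, rfl, hL⟩ := locT_node.1 hP
    obtain ⟨n, ps, Ts, hc, hq⟩ := hl σ L p hL hn
    refine ⟨n, ps, _, CStep.loc a hc, ?_⟩
    rw [collProb_loc hE, collProb_loc hE]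
    exact hq

theorem class_ne {a : Chan} {E : Proc Chan → Proc Chan → Prop} (hE : Equivalence E)
    {A D : Proc Chan}
    (h : classOf (LE a E) (Proc.loc a D) ≠ classOf (LE a E) (Proc.loc a A)) :
    classOf E D ≠ classOf E A := by
  intro he
  apply h
  have hA : A ∈ classOf E D := by rw [he]; exact hE.refl A
  exact class_loc hE ⟨_, rfl⟩ ((mem_class hE).2 hA)

theorem LE_cbb {a : Chan} {E : Proc Chan → Proc Chan → Prop} (h : IsCBB E) : IsCBB (LE a E) := by
  obtain ⟨⟨hE, hL, hQ⟩, hD⟩ := h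
  refine ⟨⟨LE_equiv hE, ?_, ?_⟩, ?_⟩
  · rintro P Q l C hl hC (rfl | ⟨A, B, rfl, rfl, hAB⟩) hne ht
    · exact ht
    · have hh : l ≠ .name a ∧ l ≠ .coname a ∧ ∃ D, Proc.loc a D ∈ C := by
        obtain ⟨t, hte, hr, hlf⟩ := ht
        obtain ⟨s, rfl, hs⟩ := exists_locT hE hte
        obtain ⟨σ, P, p, hP, hn⟩ := exists_leaf hr
        obtain ⟨L', hL', hS⟩ := hlf σ P p hP hn
        obtain ⟨L, rfl, _⟩ := locT_node.1 hP
        obtain ⟨T', e, hS', x, y⟩ := step_loc hS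
        refine ⟨x, y, ⟨T', ?_⟩, ?_⟩
        · have := L'.prop
          rw [e] at this
          exact this
        · have : Proc.loc a ⟨T', by have := L'.prop; rw [e] at this; exact this⟩ = L' :=
            Subtype.ext e.symm
          rw [this]; exact hL'
      obtain ⟨h1, h2, D, hDC⟩ := hh
      obtain rfl := class_loc hE hC hDC
      rw [LTrans_loc hE h1 h2] at ht ⊢
      exact hL A B l _ hl ⟨D, rfl⟩ hAB (hne.imp id (class_ne hE)) ht
  · rintro P Q q C hq hq1 hC (rfl | ⟨A, B, rfl, rfl, hAB⟩) hne ht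
    · exact ht
    · have hh : ∃ D, Proc.loc a D ∈ C := by
        by_contra hno
        obtain ⟨t, hte, hr, hlf⟩ := ht
        obtain ⟨s, rfl, hs⟩ := exists_locT hE hte
        obtain ⟨σ, P, p, hP, hn⟩ := exists_leaf hr
        obtain ⟨n, ps, Ts, hc, hqe⟩ := hlf σ P p hP hn
        obtain ⟨L, rfl, _⟩ := locT_node.1 hP
        obtain ⟨T', rfl, hc'⟩ := cstep_loc hc
        have hz : collProb C ps (fun i => Tm.loc a (T' i)) = 0 := by
          unfold collProb
          refine Finset.sum_eq_zero fun i _ => if_neg ?_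
          rintro ⟨X, hX, e⟩
          have hp : (T' i).ClosedAt 0 ∧ (T' i).WF := by
            have := X.prop
            rw [e] at this
            exact this
          apply hno
          refine ⟨⟨T' i, hp⟩, ?_⟩
          have : Proc.loc a ⟨T' i, hp⟩ = X := Subtype.ext e.symm
          rw [this]; exact hX
        rw [hz, zero_div] at hqe
        exact hq.ne hqe
      obtain ⟨D, hDC⟩ := hh
      obtain rfl := class_loc hE hC hDC
      rw [QTrans_loc hE] at ht ⊢
      exact hQ A B q _ hq hq1 ⟨D, rfl⟩ hAB (class_ne hE hne) ht
  · have key : ∀ A : Proc Chan, (∃ t, IsETree (LE a E) (Proc.loc a A) t ∧ t.Divergent) ↔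
        (∃ t, IsETree E A t ∧ t.Divergent) := by
      intro A
      constructor
      · rintro ⟨t, ht, hd⟩
        obtain ⟨s, rfl, hs⟩ := exists_locT hE ht
        exact ⟨s, hs, (locT_divergent a s).1 hd⟩
      · rintro ⟨s, hs, hd⟩
        exact ⟨locT a s, (locT_etree hE).2 hs, (locT_divergent a s).2 hd⟩
    rintro P Q (rfl | ⟨A, B, rfl, rfl, hAB⟩)
    · exact Iff.rfl
    · rw [key, key]
      exact hD A B hAB

end RccsAux

/-- `=_RCCS` is closed under localization. -/
theorem rccsEq_loc {Chan : Type} (a : Chan) (A B : Proc Chan) (h : RccsEq A B) :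
    RccsEq (Proc.loc a A) (Proc.loc a B) := by
  obtain ⟨E, hE, hAB⟩ := h
  exact ⟨RccsAux.LE a E, RccsAux.LE_cbb hE, Or.inr ⟨A, B, rfl, rfl, hAB⟩⟩
end
end

section
/- If (E_i)_{i∈I} is a family of codivergent branching bisimulations on the set P_CCS of CCS processes, then the equivalence closure (⋃_{i∈I} E_i)* of their union is a codivergent branching bisimulation on P_CCS; consequently there exists a largest codivergent branching bisimulation =_CCS on P_CCS. -/
/-!
Formalization of RCCS (Randomized CCS) following the paper
"A Uniform Framework for Probabilistic Process Models".
Channels form a type `Chan`; terms use de Bruijn indices for process variables.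
-/

noncomputable section
open scoped Classical

variable {Chan : Type}

/-! ### CCS -/

/-- The set `P_CCS` of CCS processes: closed well-formed terms with no random
choice, viewed inside RCCS. -/
def CProc (Chan : Type) : Type := {T : Tm Chan // T.ClosedAt 0 ∧ T.WF ∧ T.NoRand}

/-- A CCS process is an RCCS process. -/
def CProc.toProc (A : CProc Chan) : Proc Chan := ⟨A.val, A.prop.1, A.prop.2.1⟩

/-- `A →^τ_E A'`: a state-preserving silent transition. -/
def TauE (E : CProc Chan → CProc Chan → Prop) (A A' : CProc Chan) : Prop :=
  Step A.val (.tau 1) A'.val ∧ E A A'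

/-- `A` is `E`-divergent: there is an infinite sequence of state-preserving
silent transitions from `A`. -/
def CDivergent (E : CProc Chan → CProc Chan → Prop) (A : CProc Chan) : Prop :=
  ∃ f : ℕ → CProc Chan, f 0 = A ∧ ∀ n, TauE E (f n) (f (n + 1))

/-- An equivalence on `P_CCS` is codivergent if each class consists either
only of `E`-divergent processes or only of non-`E`-divergent ones. -/
def CCodivergent (E : CProc Chan → CProc Chan → Prop) : Prop :=
  ∀ A B, E A B → (CDivergent E A ↔ CDivergent E B)

/-- The `E`-class of a CCS process. -/
def cclassOf (E : CProc Chan → CProc Chan → Prop) (A : CProc Chan) : Set (CProc Chan) :=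
  {B | E A B}

/-- `C` is an `E`-class. -/
def CIsClass (E : CProc Chan → CProc Chan → Prop) (C : Set (CProc Chan)) : Prop :=
  ∃ A, C = cclassOf E A

/-- `A ⇒_E →^ℓ C`: finitely many state-preserving silent transitions followed
by an `ℓ`-transition into the class `C`. -/
def CWeakTo (E : CProc Chan → CProc Chan → Prop) (A : CProc Chan) (l : Lab Chan)
    (C : Set (CProc Chan)) : Prop :=
  ∃ A', Relation.ReflTransGen (TauE E) A A' ∧ ∃ A'' ∈ C, Step A'.val l A''.val

/-- `E` is a branching bisimulation on `P_CCS`. -/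
def CIsBB (E : CProc Chan → CProc Chan → Prop) : Prop :=
  Equivalence E ∧
  ∀ A B l C, Lab.IsAct l → CIsClass E C → E A B → (l ≠ Lab.tau 1 ∨ C ≠ cclassOf E A) →
    CWeakTo E A l C → CWeakTo E B l C

/-- `E` is a codivergent branching bisimulation on `P_CCS`. -/
def CIsCBB (E : CProc Chan → CProc Chan → Prop) : Prop := CIsBB E ∧ CCodivergent E

/-- `=_CCS`, the largest codivergent branching bisimulation on `P_CCS`. -/
def CcsEq (A B : CProc Chan) : Prop := ∃ E, CIsCBB E ∧ E A B

theorem cbb_chain {α : Type} (r : α → α → Prop) (S : α → Prop)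
    (hS : ∀ x, S x → ∃ y, Relation.TransGen r x y ∧ S y) (a : α) (ha : S a) :
    ∃ f : ℕ → α, f 0 = a ∧ ∀ n, r (f n) (f (n + 1)) := by
  let P : α → Prop := fun x => ∃ y, Relation.TransGen r x y ∧ S y
  have step : ∀ x : {x // P x}, ∃ y : {x // P x}, r x.1 y.1 := by
    rintro ⟨x, y, hxy, hy⟩
    rcases Relation.TransGen.head'_iff.1 hxy with ⟨c, hc, hcy⟩
    rcases Relation.reflTransGen_iff_eq_or_transGen.1 hcy with h | h
    · subst h
      exact ⟨⟨_, hS _ hy⟩, hc⟩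
    · exact ⟨⟨c, y, h, hy⟩, hc⟩
  choose g hg using step
  refine ⟨fun n => (g^[n] ⟨a, hS a ha⟩).1, rfl, fun n => ?_⟩
  simp only [Function.iterate_succ_apply']
  exact hg _

section
variable {Chan : Type} {R F : CProc Chan → CProc Chan → Prop}

theorem cbb_match (hR : Equivalence R) (hF : CIsBB F) (hsub : ∀ A B, F A B → R A B)
    {A A1 B : CProc Chan} {l : Lab Chan} (hl : l.IsAct) (hAB : F A B)
    (hs : Step A.val l A1.val) (hne : l ≠ Lab.tau 1 ∨ ¬ F A A1) :
    ∃ B' B1, Relation.ReflTransGen (TauE R) B B' ∧ F B B' ∧ Step B'.val l B1.val ∧ F A1 B1 := by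
  obtain ⟨B', hBB', B1, hB1, hst⟩ := hF.2 A B l (cclassOf F A1) hl ⟨A1, rfl⟩ hAB
    (hne.imp_right fun h e => h (by
      have : A1 ∈ cclassOf F A1 := hF.1.refl A1
      rw [e] at this
      exact this))
    ⟨A, .refl, A1, hF.1.refl A1, hs⟩
  refine ⟨B', B1, Relation.ReflTransGen.mono (fun x y h => ⟨h.1, hsub _ _ h.2⟩) _ _ hBB', ?_, hst, hB1⟩
  clear hst hB1
  induction hBB' with
  | refl => exact hF.1.refl _
  | tail _ h ih => exact hF.1.trans ih h.2

theorem cbb_match_tau (hR : Equivalence R) (hF : CIsBB F) (hsub : ∀ A B, F A B → R A B)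
    {A A1 B : CProc Chan} (hAB : F A B) (hs : TauE R A A1) (hne : ¬ F A A1) :
    ∃ B1, Relation.TransGen (TauE R) B B1 ∧ F A1 B1 := by
  obtain ⟨B', B1, h1, h2, h3, h4⟩ := cbb_match hR hF hsub (l := .tau 1) rfl hAB hs.1 (.inr hne)
  refine ⟨B1, .tail' h1 ⟨h3, ?_⟩, h4⟩
  exact hR.trans (hR.symm (hsub _ _ (hF.1.trans hAB h2))) (hR.trans hs.2 (hsub _ _ h4))

theorem cbb_weak (hR : Equivalence R) (hF : CIsBB F) (hsub : ∀ A B, F A B → R A B)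
    {A B : CProc Chan} {l : Lab Chan} {C : Set (CProc Chan)} (hl : l.IsAct)
    (hC : CIsClass R C) (hAB : F A B) (hne : l ≠ Lab.tau 1 ∨ C ≠ cclassOf R A)
    (hw : CWeakTo R A l C) : CWeakTo R B l C := by
  obtain ⟨A', hAA', A'', hA'', hst⟩ := hw
  have key : R A A' ∧ ∃ B', Relation.ReflTransGen (TauE R) B B' ∧ F A' B' := by
    clear hst
    induction hAA' with
    | refl => exact ⟨hR.refl _, B, .refl, hAB⟩
    | @tail x y _ h ih =>
      obtain ⟨ih0, B', ih1, ih2⟩ := ih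
      refine ⟨hR.trans ih0 h.2, ?_⟩
      by_cases hxy : F x y
      · exact ⟨B', ih1, hF.1.trans (hF.1.symm hxy) ih2⟩
      · obtain ⟨B1, h1, h2⟩ := cbb_match_tau hR hF hsub ih2 h hxy
        exact ⟨B1, ih1.trans h1.to_reflTransGen, h2⟩
  obtain ⟨hRA, B', hB', hF'⟩ := key
  obtain ⟨D, rfl⟩ := hC
  obtain ⟨B2, B3, h1, _, h3, h4⟩ := cbb_match hR hF hsub hl hF' hst
    (hne.imp_right fun h e => h (by
      have hDA : R D A := hR.trans hA'' (hR.symm (hR.trans hRA (hsub _ _ e)))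
      ext x
      exact ⟨fun hx => hR.trans (hR.symm hDA) hx, fun hx => hR.trans hDA hx⟩))
  exact ⟨B2, hB'.trans h1, B3, hR.trans hA'' (hsub _ _ h4), h3⟩

theorem cbb_div (hR : Equivalence R) (hF : CIsCBB F) (hsub : ∀ A B, F A B → R A B)
    {A B : CProc Chan} (hAB : F A B) (hd : CDivergent R A) : CDivergent R B := by
  have hE := hF.1.1
  refine cbb_chain (TauE R) (fun B => ∃ A, F A B ∧ CDivergent R A) ?_ B ⟨A, hAB, hd⟩
  clear hAB hd A B
  rintro B ⟨A, hAB, f, rfl, hf⟩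
  by_cases hn : ∃ n, ¬ F (f n) (f (n + 1))
  · have hlt : ∀ m, m ≤ Nat.find hn → F (f 0) (f m) := by
      intro m
      induction m with
      | zero => exact fun _ => hE.refl _
      | succ m ih =>
        intro hm
        exact hE.trans (ih (by omega)) (not_not.1 (Nat.find_min hn (m := m) (by omega)))
    obtain ⟨B1, h1, h2⟩ := cbb_match_tau hR hF.1 hsub
      (hE.trans (hE.symm (hlt _ le_rfl)) hAB) (hf _) (Nat.find_spec hn)
    exact ⟨B1, h1, _, h2, fun k => f (Nat.find hn + 1 + k), rfl, fun k => hf _⟩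
  · have hn' : ∀ n, F (f n) (f (n + 1)) := fun n => not_not.1 fun h => hn ⟨n, h⟩
    obtain ⟨g, rfl, hg⟩ := (hF.2 _ _ hAB).1 ⟨f, rfl, fun n => ⟨(hf n).1, hn' n⟩⟩
    exact ⟨g 1, .single ⟨(hg 0).1, hsub _ _ (hg 0).2⟩, f 0, hE.trans hAB (hg 0).2, f, rfl, hf⟩

theorem cbb_union {I : Type} (E : I → CProc Chan → CProc Chan → Prop) (h : ∀ i, CIsCBB (E i)) :
    CIsCBB (Relation.EqvGen fun A B => ∃ i, E i A B) := by
  have hR : Equivalence (Relation.EqvGen fun A B => ∃ i, E i A B) :=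
    Relation.EqvGen.is_equivalence _
  have hsub : ∀ i A B, E i A B → Relation.EqvGen (fun A B => ∃ i, E i A B) A B :=
    fun i A B hi => .rel _ _ ⟨i, hi⟩
  refine ⟨⟨hR, ?_⟩, ?_⟩
  · intro A B l C hl hC hAB
    have key : (l ≠ Lab.tau 1 ∨ C ≠ cclassOf (Relation.EqvGen fun A B => ∃ i, E i A B) A) →
        (CWeakTo (Relation.EqvGen fun A B => ∃ i, E i A B) A l C ↔
         CWeakTo (Relation.EqvGen fun A B => ∃ i, E i A B) B l C) := by
      have hcl : ∀ x y, Relation.EqvGen (fun A B => ∃ i, E i A B) x y →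
          cclassOf (Relation.EqvGen fun A B => ∃ i, E i A B) x =
          cclassOf (Relation.EqvGen fun A B => ∃ i, E i A B) y := fun x y hxy => by
        ext z
        exact ⟨fun hz => hR.trans (hR.symm hxy) hz, fun hz => hR.trans hxy hz⟩
      induction hAB with
      | rel x y hxy =>
        intro hne
        obtain ⟨i, hi⟩ := hxy
        have hne' := hne
        rw [hcl x y (hsub i _ _ hi)] at hne'
        exact ⟨cbb_weak hR (h i).1 (hsub i) hl hC hi hne,
          cbb_weak hR (h i).1 (hsub i) hl hC ((h i).1.1.symm hi) hne'⟩
      | refl x => exact fun _ => Iff.rfl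
      | symm x y hxy ih =>
        intro hne
        rw [← hcl x y hxy] at hne
        exact (ih hne).symm
      | trans x y z hxy hyz ih1 ih2 =>
        intro hne
        have hne' := hne
        rw [hcl x y hxy] at hne'
        exact (ih1 hne).trans (ih2 hne')
    exact fun hne => (key hne).1
  · intro A B hAB
    induction hAB with
    | rel x y hxy =>
      obtain ⟨i, hi⟩ := hxy
      exact ⟨cbb_div hR (h i) (hsub i) hi, cbb_div hR (h i) (hsub i) ((h i).1.1.symm hi)⟩
    | refl x => exact Iff.rfl
    | symm x y _ ih => exact ih.symm
    | trans x y z _ _ ih1 ih2 => exact ih1.trans ih2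

end

/-- If `(E_i)_{i∈I}` is a family of codivergent branching
bisimulations on `P_CCS`, then the equivalence closure of their union is a
codivergent branching bisimulation on `P_CCS`; consequently there exists a
largest codivergent branching bisimulation `=_CCS` on `P_CCS`. -/
theorem ccs_eqvGen_iUnion_cbb {Chan : Type} {I : Type}
    (E : I → CProc Chan → CProc Chan → Prop) (h : ∀ i, CIsCBB (E i)) :
    CIsCBB (Relation.EqvGen fun A B => ∃ i, E i A B) ∧
    ∃ R : CProc Chan → CProc Chan → Prop, CIsCBB R ∧
      ∀ E', CIsCBB E' → ∀ A B, E' A B → R A B := by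
  refine ⟨cbb_union E h, _, cbb_union (I := {F : CProc Chan → CProc Chan → Prop // CIsCBB F})
    (fun F => F.1) (fun F => F.2), fun E' hE' A B hAB => .rel _ _ ⟨⟨E', hE'⟩, hAB⟩⟩
end
end

section
/- The equality =_RCCS is a conservative extension of =_CCS: for all CCS processes A and B (viewed as RCCS processes), A =_CCS B if and only if A =_RCCS B. -/
/-!
Formalization of RCCS (Randomized CCS) following the paper
"A Uniform Framework for Probabilistic Process Models".
Channels form a type `Chan`; terms use de Bruijn indices for process variables.
-/

noncomputable section
open scoped Classical

variable {Chan : Type}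

theorem noRand_lift (T : Tm Chan) : ∀ c, T.NoRand → (Tm.lift c T).NoRand := by
  induction T with
  | var n => intro c h; simp [Tm.lift, Tm.NoRand]
  | sum n α T ih => intro c h i; exact ih i c (h i)
  | rand n p T ih => intro c h; exact h
  | par S T ihS ihT => intro c h; exact ⟨ihS c h.1, ihT c h.2⟩
  | loc a T ih => intro c h; exact ih c h
  | fix T ih => intro c h; exact ih (c + 1) h

theorem noRand_inst (T : Tm Chan) :
    ∀ c S, S.NoRand → T.NoRand → (Tm.inst c S T).NoRand := by
  induction T with
  | var n =>
    intro c S hS h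
    unfold Tm.inst
    split_ifs
    · trivial
    · exact hS
    · trivial
  | sum n α T ih => intro c S hS h i; exact ih i c S hS (h i)
  | rand n p T ih => intro c S hS h; exact h
  | par S T ihS ihT => intro c S hS h; exact ⟨ihS c S hS h.1, ihT c S hS h.2⟩
  | loc a T ih => intro c S hS h; exact ih c S hS h
  | fix T ih => intro c S hS h; exact ih (c + 1) _ (noRand_lift S 0 hS) h

theorem noRand_step {T T' : Tm Chan} {l : Lab Chan} (h : Step T l T') :
    T.NoRand → T'.NoRand := by
  induction h with
  | sum i => intro h; exact h i
  | rand i => intro h; exact h.elim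
  | comL _ _ ih1 ih2 => intro h; exact ⟨ih1 h.1, ih2 h.2⟩
  | comR _ _ ih1 ih2 => intro h; exact ⟨ih1 h.1, ih2 h.2⟩
  | parL _ ih => intro h; exact ⟨ih h.1, h.2⟩
  | parR _ ih => intro h; exact ⟨h.1, ih h.2⟩
  | loc a _ _ _ ih => intro h; exact ih h
  | fix _ ih => intro h; exact ih (noRand_inst _ 0 _ h h)

theorem noRand_cstep {T : Tm Chan} {n : ℕ} {p : Fin n → ℝ} {Ts : Fin n → Tm Chan}
    (h : CStep T n p Ts) : ¬ T.NoRand := by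
  induction h with
  | rand => intro h; exact h
  | parL _ ih => intro h; exact ih h.1
  | parR _ ih => intro h; exact ih h.2
  | loc a _ ih => intro h; exact ih h
  | fix _ ih => intro h; exact ih (noRand_inst _ 0 _ h h)

/-- Restriction of a relation to CCS processes. -/
def restr (E : Proc Chan → Proc Chan → Prop) (A B : CProc Chan) : Prop := E A.toProc B.toProc

/-- A randomness-free process as a CCS process. -/
def Proc.toC (P : Proc Chan) (h : P.val.NoRand) : CProc Chan := ⟨P.val, P.prop.1, P.prop.2, h⟩

theorem toProc_inj {A B : CProc Chan} (h : A.toProc = B.toProc) : A = B :=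
  Subtype.ext (congrArg (fun P : Proc Chan => P.val) h)

theorem toC_toProc (P : Proc Chan) (h : P.val.NoRand) : (P.toC h).toProc = P := rfl

theorem node_of_has {t : PTree Chan} {σ : List ℕ} (h : t.hasNode σ) :
    ∃ B p, t.node σ = some (B, p) := by
  obtain ⟨⟨B, p⟩, hx⟩ := Option.isSome_iff_exists.1 h
  exact ⟨B, p, hx⟩

theorem has_of_node {t : PTree Chan} {σ : List ℕ} {x} (h : t.node σ = some x) :
    t.hasNode σ := by
  simp [PTree.hasNode, h]

theorem etree_step {E : Proc Chan → Proc Chan → Prop} {A : Proc Chan} {t : PTree Chan}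
    (ht : IsETree E A t) {σ i B p B' q} (h : t.node σ = some (B, p))
    (h' : t.node (i :: σ) = some (B', q)) (hB : B.val.NoRand) :
    q = 1 ∧ i = 0 ∧ Step B.val (.tau 1) B'.val := by
  obtain ⟨hs, hE, hr, hone⟩ := ht
  have h1 := hs.2.2.2.2 σ i B p B' q h h'
  have hq : q = 1 := by
    by_contra hne
    obtain ⟨n, ps, Ts, hc, -⟩ := hr σ i B p B' q h h' (lt_of_le_of_ne h1.2.1 hne)
    exact noRand_cstep hc hB
  subst hq
  have h2 := hone σ i B p B' h h'
  exact ⟨rfl, h2.2.1, h2.1⟩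

theorem etree_node {E : Proc Chan → Proc Chan → Prop} (hEq : Equivalence E) {A : CProc Chan}
    {t : PTree Chan} (ht : IsETree E A.toProc t) : ∀ σ B p, t.node σ = some (B, p) →
    σ = List.replicate σ.length 0 ∧ t.pathProb σ = 1 ∧
    ∃ h : B.val.NoRand, Relation.ReflTransGen (TauE (restr E)) A (B.toC h) := by
  intro σ
  induction σ with
  | nil =>
    intro B p h
    have h0 := ht.1.1
    rw [h0] at h
    simp only [Option.some.injEq, Prod.mk.injEq] at h
    obtain ⟨rfl, rfl⟩ := h
    exact ⟨rfl, rfl, A.prop.2.2, Relation.ReflTransGen.refl⟩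
  | cons i σ ih =>
    intro B' q h'
    obtain ⟨B, p, h⟩ := node_of_has (ht.1.2.1 i σ (has_of_node h'))
    obtain ⟨hσ, hp, hB, hR⟩ := ih B p h
    obtain ⟨rfl, rfl, hst⟩ := etree_step ht h h' hB
    refine ⟨?_, ?_, noRand_step hst hB, hR.tail ⟨hst, ?_⟩⟩
    · rw [List.length_cons, List.replicate_succ, ← hσ]
    · simp [PTree.pathProb, PTree.edgeProb, h', hp]
    · exact hEq.trans (hEq.symm (ht.2.1 _ _ _ h)) (ht.2.1 _ _ _ h')

theorem etree_prefix {A : Proc Chan} {t : PTree Chan} (ht : IsSilentTree A t) (n : ℕ) :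
    ∀ m, m ≤ n → t.hasNode (List.replicate n 0) → t.hasNode (List.replicate m 0) := by
  induction n with
  | zero => intro m hm h; obtain rfl : m = 0 := by omega
            exact h
  | succ n ih =>
    intro m hm h
    rcases Nat.lt_or_ge n m with h1 | h1
    · obtain rfl : m = n + 1 := by omega
      exact h
    · exact ih m h1 (ht.2.1 0 _ h)

theorem etree_leaf_unique {E : Proc Chan → Proc Chan → Prop} (hEq : Equivalence E)
    {A : CProc Chan} {t : PTree Chan} (ht : IsETree E A.toProc t) {σ τ : List ℕ}
    (h1 : t.IsLeaf σ) (h2 : t.hasNode τ) : τ.length ≤ σ.length := by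
  obtain ⟨B, p, hB⟩ := node_of_has h1.1
  obtain ⟨B', p', hB'⟩ := node_of_has h2
  have hσ := (etree_node hEq ht _ _ _ hB).1
  have hτ := (etree_node hEq ht _ _ _ hB').1
  by_contra hlt
  apply h1.2
  rw [hσ, ← List.replicate_succ]
  rw [hτ] at h2
  exact etree_prefix ht.1 _ _ (by omega) h2

theorem etree_regular {E : Proc Chan → Proc Chan → Prop} (hEq : Equivalence E)
    {A : CProc Chan} {t : PTree Chan} (ht : IsETree E A.toProc t) {σ : List ℕ}
    (h : t.IsLeaf σ) : t.Regular := by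
  refine tendsto_const_nhds.congr' ?_
  filter_upwards [Filter.eventually_ge_atTop σ.length] with k hk
  unfold PTree.finBranchProb
  rw [tsum_eq_single σ]
  · obtain ⟨B, p, hB⟩ := node_of_has h.1
    rw [if_pos ⟨h, hk⟩, (etree_node hEq ht _ _ _ hB).2.1]
  · intro τ hne
    apply if_neg
    rintro ⟨hl, -⟩
    apply hne
    have e : τ.length = σ.length :=
      le_antisymm (etree_leaf_unique hEq ht h hl.1) (etree_leaf_unique hEq ht hl h.1)
    obtain ⟨B, p, hB⟩ := node_of_has h.1
    obtain ⟨B', p', hB'⟩ := node_of_has hl.1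
    rw [(etree_node hEq ht _ _ _ hB).1, (etree_node hEq ht _ _ _ hB').1, e]

theorem tree_divergent {t : PTree Chan} (h : ¬ ∃ σ, t.IsLeaf σ) : t.Divergent := by
  refine tendsto_const_nhds.congr ?_
  intro k
  unfold PTree.finBranchProb
  rw [tsum_congr (g := fun _ => 0), tsum_zero]
  intro τ
  apply if_neg
  rintro ⟨hl, -⟩
  exact h ⟨τ, hl⟩

theorem regular_leaf {t : PTree Chan} (h : t.Regular) : ∃ σ, t.IsLeaf σ := by
  by_contra hn
  exact one_ne_zero (tendsto_nhds_unique h (tree_divergent hn))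

theorem divergent_no_leaf {E : Proc Chan → Proc Chan → Prop} (hEq : Equivalence E)
    {A : CProc Chan} {t : PTree Chan} (ht : IsETree E A.toProc t) (h : t.Divergent) :
    ¬ ∃ σ, t.IsLeaf σ := by
  rintro ⟨σ, hσ⟩
  exact one_ne_zero (tendsto_nhds_unique (etree_regular hEq ht hσ) h)

/-- The tree consisting of a single path. -/
def pathTree (f : ℕ → CProc Chan) (D : ℕ → Prop) : PTree Chan where
  node σ := if σ = List.replicate σ.length 0 ∧ D σ.length then
    some ((f σ.length).toProc, 1) else none

theorem pathTree_node {f : ℕ → CProc Chan} {D : ℕ → Prop} {σ : List ℕ} {B p} :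
    (pathTree f D).node σ = some (B, p) ↔
      (σ = List.replicate σ.length 0 ∧ D σ.length) ∧ (f σ.length).toProc = B ∧ 1 = p := by
  unfold pathTree
  dsimp only
  split_ifs with h
  · simp only [Option.some.injEq, Prod.mk.injEq]
    exact ⟨fun x => ⟨h, x⟩, fun x => x.2⟩
  · simp [h]

theorem pathTree_has {f : ℕ → CProc Chan} {D : ℕ → Prop} {σ : List ℕ} :
    (pathTree f D).hasNode σ ↔ σ = List.replicate σ.length 0 ∧ D σ.length := by
  constructor
  · intro h
    obtain ⟨B, p, h⟩ := node_of_has h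
    exact (pathTree_node.1 h).1
  · intro h
    exact has_of_node (pathTree_node.2 ⟨h, rfl, rfl⟩)

theorem cons_repl {i : ℕ} {σ : List ℕ} (h : i :: σ = List.replicate (i :: σ).length 0) :
    i = 0 ∧ σ = List.replicate σ.length 0 := by
  rw [List.length_cons, List.replicate_succ] at h
  exact List.cons.inj h

theorem pathTree_etree {E : Proc Chan → Proc Chan → Prop} (hEq : Equivalence E)
    {f : ℕ → CProc Chan} {D : ℕ → Prop} (h0 : D 0) (hD : ∀ n, D (n + 1) → D n)
    (hf : ∀ n, D (n + 1) → TauE (restr E) (f n) (f (n + 1))) :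
    IsETree E (f 0).toProc (pathTree f D) := by
  have hE : ∀ n, D n → E (f 0).toProc (f n).toProc := by
    intro n
    induction n with
    | zero => intro _; exact hEq.refl _
    | succ n ih => intro h; exact hEq.trans (ih (hD n h)) (hf n h).2
  refine ⟨⟨pathTree_node.2 ⟨⟨rfl, h0⟩, rfl, rfl⟩, ?_, ?_, ?_, ?_⟩, ?_, ?_, ?_⟩
  · intro i σ h
    rw [pathTree_has] at h ⊢
    exact ⟨(cons_repl h.1).2, hD _ h.2⟩
  · intro i j σ hj h
    have hi := (cons_repl (pathTree_has.1 h).1).1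
    obtain rfl : j = i := by omega
    exact h
  · intro σ
    refine ⟨1, fun i hi h => ?_⟩
    have hi := (cons_repl (pathTree_has.1 h).1).1
    omega
  · intro σ i B p B' p' h h'
    obtain ⟨-, rfl, rfl⟩ := pathTree_node.1 h
    obtain ⟨⟨h1, h2⟩, rfl, rfl⟩ := pathTree_node.1 h'
    exact ⟨one_pos, le_rfl, (hf _ h2).1⟩
  · intro σ B p h
    obtain ⟨h1, rfl, rfl⟩ := pathTree_node.1 h
    exact hE _ h1.2
  · intro σ i B p B' q h h' hq
    obtain ⟨-, -, rfl⟩ := pathTree_node.1 h'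
    exact absurd hq (lt_irrefl _)
  · intro σ i B p B' h h'
    obtain ⟨-, rfl, rfl⟩ := pathTree_node.1 h
    obtain ⟨⟨h1, h2⟩, rfl, -⟩ := pathTree_node.1 h'
    refine ⟨(hf _ h2).1, (cons_repl h1).1, fun h => ?_⟩
    exact one_ne_zero (cons_repl (pathTree_has.1 h).1).1

theorem rtg_path {α : Type} {R : α → α → Prop} {a b : α} (h : Relation.ReflTransGen R a b) :
    ∃ (f : ℕ → α) (n : ℕ), f 0 = a ∧ f n = b ∧ ∀ i, i + 1 ≤ n → R (f i) (f (i + 1)) := by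
  induction h using Relation.ReflTransGen.head_induction_on with
  | refl => exact ⟨fun _ => b, 0, rfl, rfl, fun i hi => by omega⟩
  | head hac _ ih =>
    rename_i a c _
    obtain ⟨f, n, h0, hn, hs⟩ := ih
    refine ⟨fun k => Nat.casesOn k a f, n + 1, rfl, hn, fun i hi => ?_⟩
    cases i with
    | zero => subst h0; exact hac
    | succ i => exact hs i (by omega)

theorem lTrans_iff {E : Proc Chan → Proc Chan → Prop} (hEq : Equivalence E) (A : CProc Chan)
    (l : Lab Chan) (C : Set (Proc Chan)) :
    LTrans E A.toProc l C ↔ CWeakTo (restr E) A l {X | X.toProc ∈ C} := by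
  constructor
  · rintro ⟨t, ht, hr, hl⟩
    obtain ⟨σ, hσ⟩ := regular_leaf hr
    obtain ⟨B, p, hB⟩ := node_of_has hσ.1
    obtain ⟨-, -, hn, hR⟩ := etree_node hEq ht _ _ _ hB
    obtain ⟨L', hL', hs⟩ := hl σ B p hB hσ.2
    exact ⟨_, hR, L'.toC (noRand_step hs hn), hL', hs⟩
  · rintro ⟨A', hR, A'', hA'', hs⟩
    obtain ⟨f, n, rfl, rfl, hf⟩ := rtg_path hR
    have ht : IsETree E (f 0).toProc (pathTree f (fun k => k ≤ n)) :=
      pathTree_etree hEq (Nat.zero_le _) (fun k hk => by omega) hf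
    refine ⟨_, ht, etree_regular hEq ht (σ := List.replicate n 0) ⟨?_, ?_⟩, ?_⟩
    · rw [pathTree_has]; simp
    · rw [pathTree_has]; simp
    · intro σ L p h hnl
      obtain ⟨⟨h1, h2⟩, rfl, rfl⟩ := pathTree_node.1 h
      have : σ.length = n := by
        by_contra hne
        apply hnl
        rw [pathTree_has, List.length_cons, List.replicate_succ, ← h1]
        exact ⟨rfl, by omega⟩
      rw [this]
      exact ⟨_, hA'', hs⟩

theorem div_iff {E : Proc Chan → Proc Chan → Prop} (hEq : Equivalence E) (A : CProc Chan) :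
    (∃ t, IsETree E A.toProc t ∧ t.Divergent) ↔ CDivergent (restr E) A := by
  constructor
  · rintro ⟨t, ht, hd⟩
    have hn := divergent_no_leaf hEq ht hd
    have hall : ∀ n, t.hasNode (List.replicate n 0) := by
      intro n
      induction n with
      | zero => exact has_of_node ht.1.1
      | succ n ih =>
        by_contra h
        exact hn ⟨_, ih, h⟩
    choose B p hB using fun n => node_of_has (hall n)
    refine ⟨fun n => (B n).toC (etree_node hEq ht _ _ _ (hB n)).2.2.1, ?_, fun n => ⟨?_, ?_⟩⟩
    · apply toProc_inj
      have h0 := hB 0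
      have h1 := ht.1.1
      rw [List.replicate_zero, h1] at h0
      exact (Prod.mk.inj (Option.some.inj h0)).1.symm
    · exact (etree_step ht (hB n) (hB (n + 1)) (etree_node hEq ht _ _ _ (hB n)).2.2.1).2.2
    · exact hEq.trans (hEq.symm (ht.2.1 _ _ _ (hB n))) (ht.2.1 _ _ _ (hB (n + 1)))
  · rintro ⟨f, rfl, hf⟩
    refine ⟨pathTree f (fun _ => True),
      pathTree_etree hEq trivial (fun _ _ => trivial) (fun n _ => hf n), tree_divergent ?_⟩
    rintro ⟨σ, h1, h2⟩
    apply h2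
    rw [pathTree_has] at h1 ⊢
    rw [List.length_cons, List.replicate_succ, ← h1.1]
    exact ⟨rfl, trivial⟩

theorem qTrans_false {E : Proc Chan → Proc Chan → Prop} (hEq : Equivalence E) (A : CProc Chan)
    (q : ℝ) (C : Set (Proc Chan)) : ¬ QTrans E A.toProc q C := by
  rintro ⟨t, ht, hr, hl⟩
  obtain ⟨σ, hσ⟩ := regular_leaf hr
  obtain ⟨B, p, hB⟩ := node_of_has hσ.1
  obtain ⟨-, -, hn, hR⟩ := etree_node hEq ht _ _ _ hB
  obtain ⟨n, ps, Ts, hc, -⟩ := hl σ B p hB hσ.2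
  exact noRand_cstep hc hn

/-- Extension of a relation on CCS processes by the identity. -/
def extd (E : CProc Chan → CProc Chan → Prop) (P Q : Proc Chan) : Prop :=
  P = Q ∨ ∃ A B : CProc Chan, A.toProc = P ∧ B.toProc = Q ∧ E A B

theorem extd_equiv {E : CProc Chan → CProc Chan → Prop} (h : Equivalence E) :
    Equivalence (extd E) := by
  refine ⟨fun P => Or.inl rfl, ?_, ?_⟩
  · rintro P Q (rfl | ⟨A, B, rfl, rfl, hAB⟩)
    · exact Or.inl rfl
    · exact Or.inr ⟨B, A, rfl, rfl, h.symm hAB⟩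
  · rintro P Q R (rfl | ⟨A, B, rfl, rfl, hAB⟩) h2
    · exact h2
    · rcases h2 with rfl | ⟨B', D, hB, rfl, hBD⟩
      · exact Or.inr ⟨A, B, rfl, rfl, hAB⟩
      · obtain rfl := toProc_inj hB
        exact Or.inr ⟨A, D, rfl, rfl, h.trans hAB hBD⟩

theorem restr_extd {E : CProc Chan → CProc Chan → Prop} (h : Equivalence E) :
    restr (extd E) = E := by
  funext A B
  apply propext
  constructor
  · rintro (hAB | ⟨A', B', hA, hB, hAB⟩)
    · obtain rfl := toProc_inj hAB
      exact h.refl _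
    · obtain rfl := toProc_inj hA
      obtain rfl := toProc_inj hB
      exact hAB
  · intro hAB
    exact Or.inr ⟨A, B, rfl, rfl, hAB⟩

theorem classOf_eq {E : Proc Chan → Proc Chan → Prop} (hE : Equivalence E) {A B : Proc Chan}
    (h : E A B) : classOf E A = classOf E B := by
  ext X
  exact ⟨fun hx => hE.trans (hE.symm h) hx, fun hx => hE.trans h hx⟩

theorem extd_cbb {E : CProc Chan → CProc Chan → Prop} (h : CIsCBB E) : IsCBB (extd E) := by
  obtain ⟨⟨hE, hb⟩, hd⟩ := h
  have hX := extd_equiv hE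
  refine ⟨⟨hX, ?_, ?_⟩, ?_⟩
  · rintro P Q l C hl hC (rfl | ⟨A, B, rfl, rfl, hAB⟩) hne hT
    · exact hT
    · rw [lTrans_iff hX, restr_extd hE] at hT ⊢
      obtain ⟨A', hR, L, hL, hs⟩ := hT
      obtain ⟨P0, rfl⟩ := hC
      rw [classOf_eq hX hL] at hne
      have hcl : {X : CProc Chan | X.toProc ∈ classOf (extd E) P0} = cclassOf E L := by
        rw [classOf_eq hX hL]
        change cclassOf (restr (extd E)) L = cclassOf E L
        rw [restr_extd hE]
      rw [hcl] at hL ⊢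
      refine hb A B l _ hl ⟨L, rfl⟩ hAB ?_ ⟨A', hR, L, hL, hs⟩
      refine hne.imp id fun hne he => hne ?_
      have hAL : E A L := by
        change L ∈ cclassOf E A
        rw [← he]
        exact hL
      exact (classOf_eq hX (Or.inr ⟨A, L, rfl, rfl, hAL⟩)).symm
  · rintro P Q q C _ _ _ (rfl | ⟨A, B, rfl, rfl, hAB⟩) _ hT
    · exact hT
    · exact absurd hT (qTrans_false hX A q C)
  · rintro P Q (rfl | ⟨A, B, rfl, rfl, hAB⟩)
    · exact Iff.rfl
    · rw [div_iff hX, div_iff hX, restr_extd hE]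
      exact hd A B hAB

theorem restr_cbb {E : Proc Chan → Proc Chan → Prop} (h : IsCBB E) : CIsCBB (restr E) := by
  obtain ⟨⟨hE, hb, -⟩, hd⟩ := h
  refine ⟨⟨⟨fun A => hE.refl _, fun h => hE.symm h, fun h h' => hE.trans h h'⟩, ?_⟩, ?_⟩
  · rintro A B l C hl ⟨A0, rfl⟩ hAB hne hT
    refine (lTrans_iff hE B l (classOf E A0.toProc)).1
      (hb A.toProc B.toProc l _ hl ⟨_, rfl⟩ hAB ?_ ((lTrans_iff hE A l _).2 hT))
    refine hne.imp id fun hne he => hne ?_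
    ext X
    change X.toProc ∈ classOf E A0.toProc ↔ X.toProc ∈ classOf E A.toProc
    rw [he]
  · intro A B hAB
    rw [← div_iff hE, ← div_iff hE]
    exact hd _ _ hAB

/-- `=_RCCS` is a conservative extension of `=_CCS`: for all
CCS processes `A` and `B` (viewed as RCCS processes), `A =_CCS B` iff
`A =_RCCS B`. -/
theorem rccsEq_conservative {Chan : Type} (A B : CProc Chan) :
    CcsEq A B ↔ RccsEq A.toProc B.toProc := by
  constructor
  · rintro ⟨E, hE, hAB⟩
    exact ⟨extd E, extd_cbb hE, Or.inr ⟨A, B, rfl, rfl, hAB⟩⟩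
  · rintro ⟨E, hE, hAB⟩
    exact ⟨restr E, restr_cbb hE, hAB⟩
end
end
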